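/- arXiv:1703.00442 — 6 statements merged into one kernel-verified Lean document; each statement's English description precedes it below -/
import Mathlib

section
/- Let 𝔓 be a (not necessarily commutative) ring with identity, let m ≥ 2 be an integer, set n = 2m, and let b, x ∈ 𝔓. Let A ∈ M_n(𝔓) be the matrix with A_{i,i} = b for 1 ≤ i ≤ n, A_{i+2,i} = 1 for 1 ≤ i ≤ n−2, A_{1,n} = x, and all other entries 0. Then there exist invertible matrices M, N ∈ M_n(𝔓) such that MAN is the matrix C with C_{i+2,i} = 1 for 1 ≤ i ≤ n−2, C_{1,n−1} = (−1)^{m−1} b^m, C_{2,n} = (−1)^{m−1} b^m, C_{1,n} = x, and all other entries 0. -/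
/-!
Cut the matrix into `2 × 2` blocks: over the ring `M₂(𝔓)` it becomes a lower bidiagonal matrix to
whose upper right corner one extra entry is added. For such a matrix `A`, of size `l + 1` over any
ring, with diagonal entry `b` and corner entry `x`, the geometric column `uᵢ = (-b)^(l - i)`
satisfies `A u = ((-1)^l b^(l + 1) + x) e₀`. Replacing the last column of the identity by `u`
therefore gives a unitriangular `N` for which the last column of `A N` is supported in the corner.
What remains of the diagonal is `b Jᵀ J`, with `J` the lower shift, so that `A N = V C` for the
unitriangular matrix `V = 1 + b Jᵀ`.
-/

open Matrix

/-- Equivalence of `a` and `c` in a monoid `R` by a unit on either side. For matrices this is the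
usual equivalence under invertible row and column operations. -/
def UnitEquivalent {R : Type*} [Monoid R] (a c : R) : Prop :=
  ∃ u v : R, IsUnit u ∧ IsUnit v ∧ u * a * v = c

namespace UnitEquivalent

variable {R S : Type*} [Monoid R] [Monoid S] {a c : R}

theorem of_mul_eq_mul {u v : R} (hu : IsUnit u) (hv : IsUnit v) (h : a * v = u * c) :
    UnitEquivalent a c := by
  obtain ⟨u, rfl⟩ := hu
  exact ⟨↑u⁻¹, v, u⁻¹.isUnit, hv, by rw [mul_assoc, h, Units.inv_mul_cancel_left]⟩

theorem map {F : Type*} [FunLike F R S] [MonoidHomClass F R S] (f : F) (h : UnitEquivalent a c) :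
    UnitEquivalent (f a) (f c) := by
  obtain ⟨u, v, hu, hv, rfl⟩ := h
  exact ⟨f u, f v, hu.map f, hv.map f, by simp only [map_mul]⟩

end UnitEquivalent

section Unitriangular

variable {ι R : Type*} [Fintype ι] [DecidableEq ι]

theorem add_ncard_Ioi_le_of_pow_apply_ne_zero [Preorder ι] [Semiring R] {T : Matrix ι ι R}
    (hT : ∀ i j, T i j ≠ 0 → i < j) {k : ℕ} {i j : ι} (h : (T ^ k) i j ≠ 0) :
    k + (Set.Ioi j).ncard ≤ (Set.Ioi i).ncard := by
  induction k generalizing i with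
  | zero =>
    obtain rfl : i = j := by
      by_contra hij
      exact h (by rw [pow_zero, one_apply_ne hij])
    rw [zero_add]
  | succ k ih =>
    rw [pow_succ', mul_apply] at h
    obtain ⟨s, -, hs⟩ := Finset.exists_ne_zero_of_sum_ne_zero h
    have hsj := ih (right_ne_zero_of_mul hs)
    have hcard : (Set.Ioi s).ncard < (Set.Ioi i).ncard :=
      Set.ncard_lt_ncard (Set.Ioi_ssubset_Ioi (hT i s (left_ne_zero_of_mul hs)))
    lia

theorem isNilpotent_of_forall_ne_zero_lt [Preorder ι] [Semiring R] {T : Matrix ι ι R}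
    (hT : ∀ i j, T i j ≠ 0 → i < j) : IsNilpotent T := by
  refine ⟨Nat.card ι + 1, ?_⟩
  ext i j
  by_contra h
  have hpow := add_ncard_Ioi_le_of_pow_apply_ne_zero hT h
  have hcard : (Set.Ioi i).ncard ≤ Nat.card ι := Set.ncard_le_card _
  lia

theorem isUnit_of_isUpperTriangular_of_diag_eq_one [LinearOrder ι] [Ring R] {U : Matrix ι ι R}
    (hU : U.IsUpperTriangular) (hdiag : U.diag = 1) : IsUnit U := by
  have hstrict : ∀ i j, (U - 1) i j ≠ 0 → i < j := by
    intro i j h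
    contrapose! h
    rcases h.eq_or_lt with rfl | hji
    · simpa [sub_eq_zero] using congrFun hdiag j
    · rw [Matrix.sub_apply, hU hji, one_apply_ne hji.ne', sub_zero]
  simpa using (isNilpotent_of_forall_ne_zero_lt hstrict).isUnit_one_add

end Unitriangular

section LowerShift

variable {R : Type*} [NonAssocSemiring R] (l : ℕ)

/-- The lower shift, with ones on the first subdiagonal: it sends the basis vector `eⱼ` to
`eⱼ₊₁`, and the last one to `0`. -/
def lowerShift (n : ℕ) (R : Type*) [Zero R] [One R] : Matrix (Fin n) (Fin n) R :=
  of fun i j => if (i : ℕ) = j + 1 then 1 else 0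

theorem lowerShift_mulVec_zero (v : Fin (l + 1) → R) : (lowerShift (l + 1) R *ᵥ v) 0 = 0 := by
  simp [mulVec, dotProduct, lowerShift]

theorem lowerShift_mulVec_succ (v : Fin (l + 1) → R) (i : Fin l) :
    (lowerShift (l + 1) R *ᵥ v) i.succ = v i.castSucc := by
  have h (j : Fin (l + 1)) : (i : ℕ) = j ↔ i.castSucc = j := by simp [Fin.ext_iff]
  simp [mulVec, dotProduct, lowerShift, h]

theorem lowerShift_transpose_mul_single_zero (x : R) (j : Fin (l + 1)) :
    (lowerShift (l + 1) R)ᵀ * single 0 j x = 0 := by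
  ext i k
  simp [mul_apply, lowerShift, single_apply, ite_and]

end LowerShift

section CorneredBidiagonal

/-- The lower bidiagonal matrix with diagonal entries `b` and subdiagonal entries `1`, to whose
upper right corner `x` is added. The size is `l + 1`, so that there is a corner. -/
def corneredBidiagonal {R : Type*} [NonAssocSemiring R] (l : ℕ) (b x : R) :
    Matrix (Fin (l + 1)) (Fin (l + 1)) R :=
  diagonal (fun _ => b) + lowerShift (l + 1) R + single 0 (Fin.last l) x

variable {R : Type*} [Ring R] (l : ℕ) (b x : R)

/-- The column `((-b)^l, …, -b, 1)`, annihilated by every row of `corneredBidiagonal l b x` but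
the first. -/
def geometricColumn : Fin (l + 1) → R :=
  fun i => (-b) ^ (l - i)

theorem corneredBidiagonal_mulVec_geometricColumn :
    corneredBidiagonal l b x *ᵥ geometricColumn l b =
      Pi.single 0 ((-1) ^ l * b ^ (l + 1) + x) := by
  ext i
  simp only [corneredBidiagonal, add_mulVec, Pi.add_apply, mulVec_diagonal]
  cases i using Fin.cases with
  | zero =>
    have hb : b * (-b) ^ l = (-1) ^ l * b ^ (l + 1) := by
      rw [neg_pow, pow_succ', ((Commute.neg_one_left b).pow_left l).left_comm]
    simp [lowerShift_mulVec_zero, single_mulVec_eq, geometricColumn, hb]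
  | succ i =>
    have hexp : l - (i : ℕ) = l - (i + 1) + 1 := by lia
    simp [lowerShift_mulVec_succ, single_mulVec_eq, geometricColumn, hexp, pow_succ']

theorem isUnit_one_updateCol_geometricColumn :
    IsUnit ((1 : Matrix _ _ R).updateCol (Fin.last l) (geometricColumn l b)) := by
  refine isUnit_of_isUpperTriangular_of_diag_eq_one (fun i j hji => ?_) (funext fun i => ?_)
  · have hj : j ≠ Fin.last l := (hji.trans_le (Fin.le_last i)).ne
    rw [updateCol_ne hj]
    exact one_apply_ne hji.ne'
  · rcases eq_or_ne i (Fin.last l) with rfl | hi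
    · simp [geometricColumn]
    · simp [updateCol_ne hi]

theorem isUnit_one_add_smul_lowerShift_transpose (n : ℕ) :
    IsUnit (1 + b • (lowerShift n R)ᵀ) := by
  refine isUnit_of_isUpperTriangular_of_diag_eq_one (fun i j hji => ?_) (funext fun i => ?_)
  · have hij : (j : ℕ) ≠ i + 1 := by
      have : (j : ℕ) < i := hji
      lia
    have hone : (1 : Matrix (Fin n) (Fin n) R) i j = 0 := one_apply_ne hji.ne'
    simp [lowerShift, hone, hij]
  · simp [lowerShift]

theorem lowerShift_transpose_mul_lowerShift :
    (lowerShift (l + 1) R)ᵀ * lowerShift (l + 1) R = 1 - single (Fin.last l) (Fin.last l) 1 := by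
  ext i j
  cases j using Fin.lastCases with
  | last =>
    have h (k : Fin (l + 1)) : (k : ℕ) ≠ l + 1 := k.2.ne
    simp [mul_apply, lowerShift, h, single_apply, one_apply, eq_comm]
  | cast j =>
    have h (k : Fin (l + 1)) : (k : ℕ) = j + 1 ↔ k = j.succ := by simp [Fin.ext_iff]
    have hi : (j : ℕ) = i ↔ i = j.castSucc := by rw [Fin.ext_iff, eq_comm, Fin.val_castSucc]
    simp [mul_apply, lowerShift, h, hi, one_apply, (Fin.castSucc_lt_last j).ne']

theorem corneredBidiagonal_updateCol_last (c : R) :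
    (corneredBidiagonal l b x).updateCol (Fin.last l) (Pi.single 0 c) =
      b • (1 - single (Fin.last l) (Fin.last l) 1) + lowerShift (l + 1) R +
        single 0 (Fin.last l) c := by
  ext i j
  rcases eq_or_ne j (Fin.last l) with rfl | hj
  · have hi : (i : ℕ) ≠ l + 1 := i.2.ne
    simp [lowerShift, hi, single_apply, one_apply, Pi.single_apply, eq_comm]
  · simp [corneredBidiagonal, hj, hj.symm, diagonal_apply, one_apply]

theorem one_add_smul_lowerShift_transpose_mul_corneredBidiagonal (c : R) :
    (1 + b • (lowerShift (l + 1) R)ᵀ) * corneredBidiagonal l 0 c =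
      (corneredBidiagonal l b x).updateCol (Fin.last l) (Pi.single 0 c) := by
  rw [corneredBidiagonal_updateCol_last, ← lowerShift_transpose_mul_lowerShift]
  simp only [corneredBidiagonal, diagonal_zero, zero_add, add_mul, one_mul, mul_add, smul_mul,
    lowerShift_transpose_mul_single_zero, smul_zero, add_zero]
  abel

theorem unitEquivalent_corneredBidiagonal_zero :
    UnitEquivalent (corneredBidiagonal l b x)
      (corneredBidiagonal l 0 ((-1) ^ l * b ^ (l + 1) + x)) := by
  refine .of_mul_eq_mul (isUnit_one_add_smul_lowerShift_transpose b (l + 1))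
    (isUnit_one_updateCol_geometricColumn l b) ?_
  rw [mul_updateCol, mul_one, corneredBidiagonal_mulVec_geometricColumn,
    one_add_smul_lowerShift_transpose_mul_corneredBidiagonal]

end CorneredBidiagonal

section BlockFlatten

variable {R : Type*} [Semiring R]

/-- The ring isomorphism that writes an `m × m` matrix of `d × d` blocks as one matrix of size
`d * m`: row `i` of the latter is row `i % d` of block row `i / d`. -/
def blockFlatten (d m : ℕ) (R : Type*) [Semiring R] :
    Matrix (Fin m) (Fin m) (Matrix (Fin d) (Fin d) R) ≃+* Matrix (Fin (d * m)) (Fin (d * m)) R :=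
  (compRingEquiv (Fin m) (Fin d) R).trans
    (reindexRingEquiv R (finProdFinEquiv.trans (finCongr (Nat.mul_comm m d))))

theorem blockFlatten_apply (d m : ℕ) (M : Matrix (Fin m) (Fin m) (Matrix (Fin d) (Fin d) R))
    (i j : Fin (d * m)) :
    blockFlatten d m R M i j =
      M (i.cast (Nat.mul_comm d m)).divNat (j.cast (Nat.mul_comm d m)).divNat
        (i.cast (Nat.mul_comm d m)).modNat (j.cast (Nat.mul_comm d m)).modNat :=
  rfl

theorem blockFlatten_corneredBidiagonal_apply (d l : ℕ) (b : R)
    (X : Matrix (Fin d) (Fin d) R) (i j : Fin (d * (l + 1))) :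
    blockFlatten d (l + 1) R (corneredBidiagonal l (scalar (Fin d) b) X) i j =
      (if (i : ℕ) = j then b else 0) + (if (i : ℕ) = j + d then 1 else 0) +
        if (i : ℕ) < d ∧ d * l ≤ j then
          X (i.cast (Nat.mul_comm d (l + 1))).modNat (j.cast (Nat.mul_comm d (l + 1))).modNat
        else 0 := by
  have hd : 0 < d := Nat.pos_of_mul_pos_right i.pos
  have hdiag : (i : ℕ) = j ↔ i / d = j / d ∧ i % d = j % d := Nat.ext_div_mod_iff _ _ _
  have hsub : (i : ℕ) = j + d ↔ i / d = j / d + 1 ∧ i % d = j % d := by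
    rw [Nat.ext_div_mod_iff d, Nat.add_div_right _ hd, Nat.add_mod_right]
  have hrow : (i : ℕ) < d ↔ 0 = i / d := by
    rw [eq_comm, Nat.div_eq_zero_iff_lt hd]
  have hcol : d * l ≤ j ↔ l = j / d := by
    rw [mul_comm, ← Nat.le_div_iff_mul_le hd]
    have : j / d < l + 1 := Nat.div_lt_of_lt_mul j.2
    lia
  simp only [hdiag, hsub, hrow, hcol]
  simp only [blockFlatten_apply, corneredBidiagonal, lowerShift, Matrix.add_apply,
    diagonal_apply, of_apply, single_apply, scalar_apply, Fin.ext_iff, Fin.coe_divNat,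
    Fin.val_cast, Fin.val_zero, Fin.val_last, ite_and]
  congr 2 <;> split_ifs <;> simp_all [diagonal_apply, one_apply, Fin.ext_iff]

end BlockFlatten

/-- **Lemma 2.9.** Let `𝔓` be a (not necessarily commutative) ring with identity, `m ≥ 2`,
`n = 2m`, and `b x ∈ 𝔓`.  The `n × n` matrix with `b` on the diagonal, `1` on the second
subdiagonal and `x` in the upper right corner is equivalent (via invertible matrices `M`, `N`)
to the matrix with `1` on the second subdiagonal, `(-1)^(m-1) * b^m` in positions `(1, n-1)`
and `(2, n)`, and `x` in position `(1, n)` (all indices written `1`-based; below matrices are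
`0`-indexed). -/
theorem stmt0 {P : Type*} [Ring P] (m : ℕ) (hm : 2 ≤ m) (b x : P)
    (A C : Matrix (Fin (2 * m)) (Fin (2 * m)) P)
    (hA : ∀ i j : Fin (2 * m), A i j =
      if (i : ℕ) = (j : ℕ) then b
      else if (i : ℕ) = (j : ℕ) + 2 then 1
      else if (i : ℕ) = 0 ∧ (j : ℕ) = 2 * m - 1 then x
      else 0)
    (hC : ∀ i j : Fin (2 * m), C i j =
      if (i : ℕ) = (j : ℕ) + 2 then 1
      else if (i : ℕ) = 0 ∧ (j : ℕ) = 2 * m - 2 then (-1 : P) ^ (m - 1) * b ^ m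
      else if (i : ℕ) = 1 ∧ (j : ℕ) = 2 * m - 1 then (-1 : P) ^ (m - 1) * b ^ m
      else if (i : ℕ) = 0 ∧ (j : ℕ) = 2 * m - 1 then x
      else 0) :
    ∃ M N : Matrix (Fin (2 * m)) (Fin (2 * m)) P,
      IsUnit M ∧ IsUnit N ∧ M * A * N = C := by
  obtain ⟨l, rfl⟩ : ∃ l, m = l + 1 := ⟨m - 1, by lia⟩
  have hAblock : A = blockFlatten 2 (l + 1) P
      (corneredBidiagonal l (scalar (Fin 2) b) (single 0 1 x)) := by
    ext i j
    rw [hA, blockFlatten_corneredBidiagonal_apply]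
    simp only [single_apply, Fin.ext_iff, Fin.coe_modNat, Fin.val_cast]
    grind
  have hCblock : C = blockFlatten 2 (l + 1) P (corneredBidiagonal l 0
      (scalar (Fin 2) ((-1) ^ l * b ^ (l + 1)) + single 0 1 x)) := by
    ext i j
    rw [hC, ← map_zero (scalar (Fin 2)), blockFlatten_corneredBidiagonal_apply]
    simp only [Matrix.add_apply, scalar_apply, diagonal_apply, single_apply, Fin.ext_iff,
      Fin.coe_modNat, Fin.val_cast]
    grind
  simp only [hAblock, hCblock, map_mul, map_pow, map_neg, map_one]
  exact (unitEquivalent_corneredBidiagonal_zero l (scalar (Fin 2) b) (single 0 1 x)).map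
    (blockFlatten 2 (l + 1) P)
end

section
/- Let 𝔓 be a (not necessarily commutative) ring with identity, let m ≥ 2 be an integer, set n = 2m+1, and let b, x, y ∈ 𝔓. Let A ∈ M_n(𝔓) be the matrix with A_{i,i} = b for 1 ≤ i ≤ n, A_{i+2,i} = 1 for 1 ≤ i ≤ n−2, A_{1,n−1} = x, A_{2,n} = y, and all other entries 0. Then there exist invertible matrices M, N ∈ M_n(𝔓) such that MAN is the matrix C with C_{i+2,i} = 1 for 1 ≤ i ≤ n−2, C_{1,n−1} = x, C_{1,n} = (−1)^m b^{m+1}, C_{2,n−1} = (−1)^{m−1} b^m, C_{2,n} = y, and all other entries 0. -/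
/-!
Let `S` be the matrix with ones on the second subdiagonal, `T` its transpose and `X` the block
carrying `x` and `y`, so that the given matrix is `b + S + X`. Left multiplication by the inverse
`G` of the unipotent matrix `1 + b T` turns it into `S + X + D` with `D = G b (1 - T S)`: the
diagonal is pushed upwards until it only lives in the last two columns. There `D T = 0`, so
`1 - T D` is invertible, and right multiplication by it replaces `D` by `(1 - S T) D`, its first two
rows. Expanding `G = ∑ (-b T) ^ k` yields the entries `(-1) ^ k b ^ (k + 1)`.
-/

open Finset Matrix

theorem exists_isUnit_mul_add_add_mul_eq {R : Type*} [Ring R] {S T β X : R} {N : ℕ}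
    (hTST : T * S * T = T) (hTX : T * X = 0) (hXT : X * T = 0) (hN : (β * T) ^ N = 0) :
    ∃ u v : R, IsUnit u ∧ IsUnit v ∧ u * (β + S + X) * v =
      S + X + (1 - S * T) * ((∑ k ∈ range N, (-(β * T)) ^ k) * β) * (1 - T * S) := by
  set G := ∑ k ∈ range N, (-(β * T)) ^ k
  have hN' : (-(β * T)) ^ N = 0 := by rw [neg_pow, hN, mul_zero]
  have left_inv : G * (1 + β * T) = 1 := by
    simpa only [sub_neg_eq_add, hN', sub_zero] using geom_sum_mul_neg (-(β * T)) N
  have right_inv : (1 + β * T) * G = 1 := by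
    simpa only [sub_neg_eq_add, hN', sub_zero] using mul_neg_geom_sum (-(β * T)) N
  set D := G * β * (1 - T * S)
  have hDT : D * T = 0 := by
    rw [mul_assoc, sub_mul, one_mul, hTST, sub_self, mul_zero]
  have factor : β + S + X = (1 + β * T) * (S + X + D) := by
    have hD : (1 + β * T) * D = β * (1 - T * S) := by
      rw [← mul_assoc, ← mul_assoc, right_inv, one_mul]
    rw [mul_add, hD, add_mul, one_mul, mul_assoc, mul_add T, hTX]
    noncomm_ring
  have hTD : IsNilpotent (T * D) := ⟨2, by rw [sq, mul_assoc, ← mul_assoc D, hDT]; simp⟩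
  refine ⟨G, 1 - T * D, ⟨⟨G, 1 + β * T, left_inv, right_inv⟩, rfl⟩, hTD.isUnit_one_sub, ?_⟩
  calc G * (β + S + X) * (1 - T * D)
      = (S + X + D) * (1 - T * D) := by rw [factor, ← mul_assoc, left_inv, one_mul]
    _ = S + X + D - (S * T + X * T + D * T) * D := by noncomm_ring
    _ = S + X + (1 - S * T) * D := by rw [hXT, hDT]; noncomm_ring
    _ = S + X + (1 - S * T) * (G * β) * (1 - T * S) := by rw [mul_assoc (1 - S * T)]

section PartialEquiv

variable {ι κ P : Type*} [DecidableEq ι] [DecidableEq κ] [Fintype κ]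

theorem toMatrix_mul_toMatrix_symm_mul_toMatrix [Fintype ι] [NonAssocSemiring P] (f : ι ≃. κ) :
    (f.toMatrix : Matrix ι κ P) * (f.symm.toMatrix : Matrix κ ι P) * (f.toMatrix : Matrix ι κ P) =
      f.toMatrix := by
  rw [← PEquiv.toMatrix_trans, ← PEquiv.toMatrix_trans]
  congr 1
  ext i j
  simp only [PEquiv.trans_eq_some, PEquiv.eq_some_iff]
  grind

theorem one_sub_toMatrix_mul_toMatrix_symm [NonAssocRing P] (f : ι ≃. κ) :
    1 - (f.toMatrix : Matrix ι κ P) * (f.symm.toMatrix : Matrix κ ι P) =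
      diagonal fun i => if f i = none then (1 : P) else 0 := by
  rw [← PEquiv.toMatrix_trans, PEquiv.self_trans_symm]
  ext i j
  simp only [Matrix.sub_apply, one_apply, PEquiv.toMatrix_apply, PEquiv.mem_ofSet_iff,
    Set.mem_ofPred_eq, diagonal_apply, Option.isSome_iff_ne_none]
  grind

theorem commute_scalar_toMatrix [Semiring P] (b : P) (f : κ ≃. κ) :
    Commute (scalar κ b) f.toMatrix :=
  scalar_commute_iff.2 <| by ext i j; simp

end PartialEquiv

/-- The partial translation `i ↦ i + d` of `Fin n`. Its matrix has ones on the `d`-th superdiagonal,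
and the matrix of its inverse has ones on the `d`-th subdiagonal. -/
def finShift (n d : ℕ) : Fin n ≃. Fin n where
  toFun i := if h : i + d < n then some ⟨i + d, h⟩ else none
  invFun j := if d ≤ j then some ⟨j - d, by omega⟩ else none
  inv i j := by grind

section finShift

variable {n d : ℕ} {ι P : Type*}

theorem mem_finShift {i j : Fin n} : j ∈ finShift n d i ↔ (j : ℕ) = i + d := by
  rw [Option.mem_def, finShift, PEquiv.coe_mk]
  grind

theorem finShift_eq_none {i : Fin n} : finShift n d i = none ↔ n ≤ i + d := by
  simp [finShift]

theorem finShift_symm_eq_none {j : Fin n} : (finShift n d).symm j = none ↔ (j : ℕ) < d := by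
  simp [finShift, PEquiv.symm]

theorem finShift_trans (e : ℕ) : (finShift n d).trans (finShift n e) = finShift n (d + e) := by
  ext i j
  simp only [← Option.mem_def, PEquiv.mem_trans, mem_finShift]
  exact ⟨fun ⟨_, _, _⟩ => by omega, fun hj => ⟨⟨i + d, by omega⟩, rfl, by grind⟩⟩

theorem finShift_toMatrix_apply [Zero P] [One P] (i j : Fin n) :
    (finShift n d).toMatrix i j = if (j : ℕ) = i + d then (1 : P) else 0 := by
  simp only [PEquiv.toMatrix_apply, mem_finShift]

theorem finShift_symm_toMatrix_apply [Zero P] [One P] (i j : Fin n) :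
    (finShift n d).symm.toMatrix i j = if (i : ℕ) = j + d then (1 : P) else 0 := by
  rw [PEquiv.toMatrix_symm, transpose_apply, finShift_toMatrix_apply]

theorem finShift_toMatrix_pow [Semiring P] (k : ℕ) :
    ((finShift n d).toMatrix : Matrix (Fin n) (Fin n) P) ^ k = (finShift n (d * k)).toMatrix := by
  induction k with
  | zero => ext i j; simp only [pow_zero, mul_zero, one_apply, finShift_toMatrix_apply, add_zero,
      Fin.ext_iff, eq_comm]
  | succ k ih => rw [pow_succ, ih, ← PEquiv.toMatrix_trans, finShift_trans, mul_add_one]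

theorem finShift_toMatrix_of_le [Zero P] [One P] (h : n ≤ d) :
    ((finShift n d).toMatrix : Matrix (Fin n) (Fin n) P) = 0 := by
  ext i j
  rw [finShift_toMatrix_apply, if_neg (by omega), Matrix.zero_apply]

theorem finShift_toMatrix_mul_eq_zero [NonAssocSemiring P] {X : Matrix (Fin n) ι P}
    (hX : ∀ i j, d ≤ Fin.val i → X i j = 0) :
    ((finShift n d).toMatrix : Matrix (Fin n) (Fin n) P) * X = 0 := by
  ext i j
  refine (mul_apply ..).trans (sum_eq_zero fun k _ => ?_)
  rw [finShift_toMatrix_apply]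
  split_ifs with hk
  · rw [hX k j (by omega), mul_zero]
  · rw [zero_mul]

theorem mul_finShift_toMatrix_eq_zero [NonAssocSemiring P] {X : Matrix ι (Fin n) P}
    (hX : ∀ i j, Fin.val j + d < n → X i j = 0) :
    X * ((finShift n d).toMatrix : Matrix (Fin n) (Fin n) P) = 0 := by
  ext i j
  refine (mul_apply ..).trans (sum_eq_zero fun k _ => ?_)
  rw [finShift_toMatrix_apply]
  split_ifs with hk
  · rw [hX i k (by omega), zero_mul]
  · rw [mul_zero]

theorem scalar_mul_finShift_toMatrix_pow [Semiring P] (b : P) (k : ℕ) :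
    (scalar (Fin n) b * (finShift n d).toMatrix) ^ k =
      scalar (Fin n) (b ^ k) * (finShift n (d * k)).toMatrix := by
  rw [(commute_scalar_toMatrix b _).mul_pow, ← map_pow, finShift_toMatrix_pow]

theorem scalar_mul_finShift_toMatrix_pow_eq_zero [Semiring P] (hd : 0 < d) (b : P) :
    (scalar (Fin n) b * (finShift n d).toMatrix) ^ n = 0 := by
  rw [scalar_mul_finShift_toMatrix_pow,
    finShift_toMatrix_of_le (Nat.le_mul_of_pos_left n hd), mul_zero]

theorem geom_sum_finShift_mul_scalar_apply [Ring P] (hd : 0 < d) (b : P) (i j : Fin n) :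
    ((∑ k ∈ range n, (-(scalar (Fin n) b * (finShift n d).toMatrix)) ^ k) * scalar (Fin n) b :
      Matrix (Fin n) (Fin n) P) i j =
      if (i : ℕ) ≤ j ∧ d ∣ j - i then
        (-1) ^ ((j - i : ℕ) / d) * b ^ ((j - i : ℕ) / d + 1) else 0 := by
  have term (k : ℕ) :
      ((-(scalar (Fin n) b * (finShift n d).toMatrix)) ^ k * scalar (Fin n) b :
        Matrix (Fin n) (Fin n) P) i j =
        if (j : ℕ) = i + d * k then (-1) ^ k * b ^ (k + 1) else 0 := by
    rw [← neg_mul, ← map_neg, scalar_mul_finShift_toMatrix_pow, scalar_apply, scalar_apply,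
      mul_diagonal, diagonal_mul, finShift_toMatrix_apply, neg_pow]
    simp only [mul_ite, mul_one, mul_zero, ite_mul, zero_mul, mul_assoc, ← pow_succ]
  simp only [sum_mul, Matrix.sum_apply, term]
  split_ifs with h
  · obtain ⟨hij, q, hq⟩ := h
    have eq_iff (k : ℕ) : (j : ℕ) = i + d * k ↔ k = q := by
      rw [show (j : ℕ) = i + d * q by omega, Nat.add_left_cancel_iff,
        Nat.mul_left_cancel_iff hd, eq_comm]
    have hqn : q < n := (Nat.le_mul_of_pos_left q hd).trans_lt (by omega)
    simp only [eq_iff, sum_ite_eq', mem_range, if_pos hqn, hq, Nat.mul_div_cancel_left q hd]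
  · refine sum_eq_zero fun k _ => if_neg fun hk => h ?_
    exact ⟨by omega, k, by omega⟩

/-- What remains of the diagonal matrix `b` after elimination against the `d`-th subdiagonal: the
`d × d` upper right corner (first `d` rows, last `d` columns) of the Toeplitz matrix with entries
`(-1) ^ k * b ^ (k + 1)` in positions `(i, i + d * k)`. -/
def cornerResidue (n d : ℕ) [Ring P] (b : P) : Matrix (Fin n) (Fin n) P :=
  of fun i j => if (i : ℕ) < d ∧ n ≤ j + d ∧ (i : ℕ) ≤ j ∧ d ∣ j - i then
    (-1) ^ ((j - i : ℕ) / d) * b ^ ((j - i : ℕ) / d + 1) else 0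

theorem corner_geom_sum_eq_cornerResidue [Ring P] (hd : 0 < d) (b : P) :
    (1 - (finShift n d).symm.toMatrix * (finShift n d).toMatrix) *
      ((∑ k ∈ range n, (-(scalar (Fin n) b * (finShift n d).toMatrix)) ^ k) * scalar (Fin n) b) *
      (1 - (finShift n d).toMatrix * (finShift n d).symm.toMatrix) = cornerResidue n d b := by
  have hrows := one_sub_toMatrix_mul_toMatrix_symm (P := P) (finShift n d).symm
  rw [PEquiv.symm_symm] at hrows
  ext i j
  rw [hrows, one_sub_toMatrix_mul_toMatrix_symm, mul_diagonal, diagonal_mul,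
    geom_sum_finShift_mul_scalar_apply hd]
  simp only [finShift_eq_none, finShift_symm_eq_none, cornerResidue, of_apply,
    ite_mul, one_mul, zero_mul, mul_ite, mul_one, mul_zero, ← ite_and]
  exact if_congr (by tauto) rfl rfl

theorem cornerResidue_two_apply [Ring P] {m : ℕ} (hm : 0 < m) (b : P) (i j : Fin (2 * m + 1)) :
    cornerResidue (2 * m + 1) 2 b i j =
      if (i : ℕ) = 0 ∧ (j : ℕ) = 2 * m then (-1) ^ m * b ^ (m + 1)
      else if (i : ℕ) = 1 ∧ (j : ℕ) = 2 * m - 1 then (-1) ^ (m - 1) * b ^ m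
      else 0 := by
  rw [cornerResidue, of_apply]
  split_ifs with h h₀ h₁ h₀ h₁
  · rw [show (j - i : ℕ) / 2 = m by omega]
  · rw [show (j - i : ℕ) / 2 = m - 1 by omega, Nat.sub_add_cancel hm]
  all_goals first | rfl | omega

end finShift

theorem stmt1_general {P : Type*} [Ring P] {n d : ℕ} (hd : 0 < d) (b : P)
    {X : Matrix (Fin n) (Fin n) P} (hrow : ∀ i j : Fin n, d ≤ (i : ℕ) → X i j = 0)
    (hcol : ∀ i j : Fin n, (j : ℕ) + d < n → X i j = 0) :
    ∃ M N : Matrix (Fin n) (Fin n) P, IsUnit M ∧ IsUnit N ∧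
      M * (scalar (Fin n) b + (finShift n d).symm.toMatrix + X) * N =
        (finShift n d).symm.toMatrix + X + cornerResidue n d b := by
  rw [← corner_geom_sum_eq_cornerResidue hd]
  exact exists_isUnit_mul_add_add_mul_eq (toMatrix_mul_toMatrix_symm_mul_toMatrix _)
    (finShift_toMatrix_mul_eq_zero hrow) (mul_finShift_toMatrix_eq_zero hcol)
    (scalar_mul_finShift_toMatrix_pow_eq_zero hd b)

/-- **Corollary 2.14.** Let `𝔓` be a (not necessarily commutative) ring with identity,
`m ≥ 2`, `n = 2m + 1`, and `b x y ∈ 𝔓`.  The `n × n` matrix with `b` on the diagonal, `1` on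
the second subdiagonal, `x` in position `(1, n-1)` and `y` in position `(2, n)` is equivalent
(via invertible matrices `M`, `N`) to the matrix with `1` on the second subdiagonal,
`x` in position `(1, n-1)`, `(-1)^m * b^(m+1)` in position `(1, n)`, `(-1)^(m-1) * b^m` in
position `(2, n-1)` and `y` in position `(2, n)` (indices written `1`-based; below matrices
are `0`-indexed, with `n = 2m + 1`, so `n - 1 = 2m` and `n - 2 = 2m - 1` as `0`-based
indices of the last two columns). -/
theorem stmt1 {P : Type*} [Ring P] (m : ℕ) (hm : 2 ≤ m) (b x y : P)
    (A C : Matrix (Fin (2 * m + 1)) (Fin (2 * m + 1)) P)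
    (hA : ∀ i j : Fin (2 * m + 1), A i j =
      if (i : ℕ) = (j : ℕ) then b
      else if (i : ℕ) = (j : ℕ) + 2 then 1
      else if (i : ℕ) = 0 ∧ (j : ℕ) = 2 * m - 1 then x
      else if (i : ℕ) = 1 ∧ (j : ℕ) = 2 * m then y
      else 0)
    (hC : ∀ i j : Fin (2 * m + 1), C i j =
      if (i : ℕ) = (j : ℕ) + 2 then 1
      else if (i : ℕ) = 0 ∧ (j : ℕ) = 2 * m - 1 then x
      else if (i : ℕ) = 0 ∧ (j : ℕ) = 2 * m then (-1 : P) ^ m * b ^ (m + 1)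
      else if (i : ℕ) = 1 ∧ (j : ℕ) = 2 * m - 1 then (-1 : P) ^ (m - 1) * b ^ m
      else if (i : ℕ) = 1 ∧ (j : ℕ) = 2 * m then y
      else 0) :
    ∃ M N : Matrix (Fin (2 * m + 1)) (Fin (2 * m + 1)) P,
      IsUnit M ∧ IsUnit N ∧ M * A * N = C := by
  let X : Matrix (Fin (2 * m + 1)) (Fin (2 * m + 1)) P := of fun i j =>
    if (i : ℕ) = 0 ∧ (j : ℕ) = 2 * m - 1 then x
    else if (i : ℕ) = 1 ∧ (j : ℕ) = 2 * m then y
    else 0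
  have hA' : A = scalar _ b + (finShift (2 * m + 1) 2).symm.toMatrix + X := by
    ext i j
    simp only [hA, X, Matrix.add_apply, scalar_apply, diagonal_apply, finShift_symm_toMatrix_apply,
      of_apply, Fin.ext_iff]
    split_ifs <;> first | omega | simp
  have hC' : C = (finShift (2 * m + 1) 2).symm.toMatrix + X + cornerResidue (2 * m + 1) 2 b := by
    ext i j
    simp only [hC, X, Matrix.add_apply, finShift_symm_toMatrix_apply, of_apply,
      cornerResidue_two_apply (zero_lt_two.trans_le hm)]
    split_ifs <;> first | omega | simp
  rw [hA', hC']
  refine stmt1_general two_pos b (fun i j hi => ?_) fun i j hj => ?_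
  · simp only [X, of_apply]; grind
  · simp only [X, of_apply]; grind
end

section
/- Let 𝔓 be a (not necessarily commutative) ring with identity, let n ≥ 2 be an integer and b ∈ 𝔓. Let A ∈ M_n(𝔓) be the matrix with A_{i,i} = b for 1 ≤ i ≤ n, A_{i+1,i} = 1 for 1 ≤ i ≤ n−1, and all other entries 0. Then there exist upper triangular matrices B, C ∈ M_n(𝔓), each having every diagonal entry equal to 1, such that BAC is the matrix with (i+1,i)-entry 1 for 1 ≤ i ≤ n−1, (1,n)-entry (−1)^{n+1} b^n, and all other entries 0. -/
/-!
Let `A` have diagonal entries `d 0, …, d (n - 1)` and subdiagonal entries `1`. Rows `1, …, n - 1`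
of `A` are the first `n - 1` rows of the upper bidiagonal matrix `U` with unit diagonal and
superdiagonal entries `d 1, …, d (n - 1)`, so `A * U⁻¹` has the desired rows below its first row
`v = d 0 • (U⁻¹) 0`. These rows are standard basis vectors, and subtracting multiples of them from
row `0` clears every entry of `v` except the last, `d 0 * (-d 1) * ⋯ * (-d (n - 1))`.
-/

open Matrix

section FirstRowCompanion

variable {R : Type*} {m n : ℕ}

/-- The companion matrix with first row `v`, ones on the subdiagonal and zeros elsewhere: the
normal form of the reduction, and with `v = 0` the shift matrix. -/
def firstRowCompanion [Zero R] [One R] (v : Fin (n + 1) → R) :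
    Matrix (Fin (n + 1)) (Fin (n + 1)) R :=
  Matrix.of (Fin.cons v fun i => Pi.single i.castSucc 1)

@[simp]
theorem firstRowCompanion_zero_row [Zero R] [One R] (v : Fin (n + 1) → R) :
    firstRowCompanion v 0 = v := rfl

@[simp]
theorem firstRowCompanion_succ_row [Zero R] [One R] (v : Fin (n + 1) → R) (i : Fin n) :
    firstRowCompanion v i.succ = Pi.single i.castSucc 1 := rfl

theorem firstRowCompanion_succ_apply [Zero R] [One R] (v : Fin (n + 1) → R) (i : Fin n)
    (j : Fin (n + 1)) :
    firstRowCompanion v i.succ j = if (i.succ : ℕ) = j + 1 then 1 else 0 := by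
  simp [Pi.single_apply, Fin.ext_iff, eq_comm]

theorem firstRowCompanion_mul_zero_row [NonAssocSemiring R] (v : Fin (n + 1) → R)
    (M : Matrix (Fin (n + 1)) (Fin m) R) : (firstRowCompanion v * M) 0 = v ᵥ* M := rfl

theorem firstRowCompanion_mul_succ_row [NonAssocSemiring R] (v : Fin (n + 1) → R)
    (M : Matrix (Fin (n + 1)) (Fin m) R) (i : Fin n) :
    (firstRowCompanion v * M) i.succ = M i.castSucc := by
  rw [mul_apply_eq_vecMul, firstRowCompanion_succ_row, single_one_vecMul, row]

theorem eq_diagonal_add_firstRowCompanion [AddZeroClass R] [One R] {d : ℕ → R}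
    {A : Matrix (Fin (n + 1)) (Fin (n + 1)) R}
    (hA : ∀ i j : Fin (n + 1),
      A i j = if (i : ℕ) = j then d i else if (i : ℕ) = j + 1 then 1 else 0) :
    A = diagonal (fun i : Fin (n + 1) => d i) + firstRowCompanion 0 := by
  ext i j
  rw [hA, Matrix.add_apply, diagonal_apply]
  cases i using Fin.cases with
  | zero => simp [eq_comm]
  | succ i =>
    rw [firstRowCompanion_succ_apply]
    split_ifs <;> simp_all [Fin.ext_iff]

end FirstRowCompanion

section FirstRowClearing

variable {R : Type*} {n : ℕ}

/-- The identity matrix with first row replaced by `(1, -v₀, -v₁, …)`; left multiplication by it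
clears the first row `v` of a companion matrix, up to its last entry. -/
def firstRowClearing [Zero R] [One R] [Neg R] (v : Fin (n + 1) → R) :
    Matrix (Fin (n + 1)) (Fin (n + 1)) R :=
  updateRow 1 0 (Fin.cons 1 fun j => -v j.castSucc)

theorem firstRowClearing_apply_self [Zero R] [One R] [Neg R] (v : Fin (n + 1) → R)
    (i : Fin (n + 1)) : firstRowClearing v i i = 1 := by
  cases i using Fin.cases <;> simp [firstRowClearing]

theorem isUpperTriangular_firstRowClearing [Zero R] [One R] [Neg R] (v : Fin (n + 1) → R) :
    (firstRowClearing v).IsUpperTriangular := fun i j (hji : j < i) => by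
  simp only [firstRowClearing, updateRow_ne (Fin.ne_zero_of_lt hji), one_apply_ne hji.ne']

theorem firstRowClearing_mul_firstRowCompanion [NonAssocRing R] (v : Fin (n + 1) → R) :
    firstRowClearing v * firstRowCompanion v =
      firstRowCompanion (Pi.single (Fin.last n) (v (Fin.last n))) := by
  ext i j
  cases i using Fin.cases with
  | zero =>
    rw [mul_apply, Fin.sum_univ_succ]
    cases j using Fin.lastCases <;> simp [firstRowClearing, Pi.single_apply]
  | succ i =>
    have hrow : firstRowClearing v i.succ = Pi.single i.succ 1 := by
      ext k
      simp [firstRowClearing, one_eq_pi_single]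
    rw [mul_apply_eq_vecMul, hrow, single_one_vecMul, row, firstRowCompanion_succ_row,
      firstRowCompanion_succ_row]

end FirstRowClearing

section IntervalProd

variable {R : Type*} {n : ℕ}

/-- The upper triangular matrix with entries `e (i + 1) * ⋯ * e j` for `i ≤ j`. Over a ring it is
inverse to the matrix with unit diagonal and superdiagonal entries `-e 1, -e 2, …`. -/
def intervalProd [MonoidWithZero R] (e : ℕ → R) (n : ℕ) : Matrix (Fin n) (Fin n) R :=
  Matrix.of fun i j => if i ≤ j then ((List.range' (i + 1) (j - i)).map e).prod else 0

theorem intervalProd_apply_self [MonoidWithZero R] (e : ℕ → R) (i : Fin n) :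
    intervalProd e n i i = 1 := by
  simp [intervalProd]

theorem isUpperTriangular_intervalProd [MonoidWithZero R] (e : ℕ → R) :
    (intervalProd e n).IsUpperTriangular := fun i j (hji : j < i) => by
  simp [intervalProd, hji.not_ge]

theorem intervalProd_castSucc_row [Semiring R] (e : ℕ → R) (i : Fin n) :
    intervalProd e (n + 1) i.castSucc =
      Pi.single i.castSucc 1 + e (i + 1) • intervalProd e (n + 1) i.succ := by
  ext j
  rcases lt_trichotomy i.castSucc j with hij | rfl | hji
  · have hlen : (j : ℕ) - i = (j - (i + 1)) + 1 := by
      have : (i : ℕ) < j := hij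
      omega
    simp [intervalProd, hij.le, hij.ne', Fin.castSucc_lt_iff_succ_le.mp hij, hlen,
      List.range'_succ]
  · simp [intervalProd]
  · have hji' : ¬ i.succ ≤ j := (hji.trans i.castSucc_lt_succ).not_ge
    simp [intervalProd, hji.not_ge, hji.ne, hji']

theorem mul_intervalProd_neg_zero_last [MonoidWithZero R] [HasDistribNeg R] (d : ℕ → R) :
    d 0 * intervalProd (-d) (n + 1) 0 (Fin.last n) =
      (-1) ^ n * ((List.range (n + 1)).map d).prod := by
  have hneg : ((List.range' 1 n).map (-d)).prod = (-1) ^ n * ((List.range' 1 n).map d).prod := by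
    simpa [Function.comp_def, Pi.neg_def] using ((List.range' 1 n).map d).prod_map_neg
  simp [intervalProd, hneg, List.range_eq_range', List.range'_succ,
    ((Commute.neg_one_right (d 0)).pow_right n).left_comm]

theorem bidiagonal_mul_intervalProd_neg [Ring R] (d : ℕ → R) :
    (diagonal (fun i : Fin (n + 1) => d i) + firstRowCompanion 0) * intervalProd (-d) (n + 1) =
      firstRowCompanion (d 0 • intervalProd (-d) (n + 1) 0) := by
  ext i j
  rw [add_mul, Matrix.add_apply, diagonal_mul]
  cases i using Fin.cases with
  | zero => simp [firstRowCompanion_mul_zero_row]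
  | succ i => simp [firstRowCompanion_mul_succ_row, intervalProd_castSucc_row]

end IntervalProd

theorem stmt2_general {P : Type*} [Ring P] (n : ℕ) (d : ℕ → P)
    (A : Matrix (Fin n) (Fin n) P)
    (hA : ∀ i j : Fin n, A i j =
      if (i : ℕ) = (j : ℕ) then d i
      else if (i : ℕ) = (j : ℕ) + 1 then 1
      else 0) :
    ∃ B C : Matrix (Fin n) (Fin n) P,
      (∀ i : Fin n, B i i = 1) ∧ (∀ i j : Fin n, (j : ℕ) < (i : ℕ) → B i j = 0) ∧
      (∀ i : Fin n, C i i = 1) ∧ (∀ i j : Fin n, (j : ℕ) < (i : ℕ) → C i j = 0) ∧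
      ∀ i j : Fin n, (B * A * C) i j =
        if (i : ℕ) = (j : ℕ) + 1 then 1
        else if (i : ℕ) = 0 ∧ (j : ℕ) = n - 1 then
          (-1 : P) ^ (n + 1) * ((List.range n).map d).prod
        else 0 := by
  cases n with
  | zero => exact ⟨0, 0, by simp⟩
  | succ m =>
    let C := intervalProd (-d) (m + 1)
    let B := firstRowClearing (d 0 • C 0)
    refine ⟨B, C, firstRowClearing_apply_self _,
      fun _ _ hji => isUpperTriangular_firstRowClearing _ hji, intervalProd_apply_self _,
      fun _ _ hji => isUpperTriangular_intervalProd _ hji, fun i j => ?_⟩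
    rw [eq_diagonal_add_firstRowCompanion hA, Matrix.mul_assoc, bidiagonal_mul_intervalProd_neg,
      firstRowClearing_mul_firstRowCompanion, Pi.smul_apply, smul_eq_mul,
      mul_intervalProd_neg_zero_last]
    cases i using Fin.cases with
    | zero => simp [Pi.single_apply, Fin.ext_iff (b := Fin.last m), pow_succ]
    | succ i => simp [firstRowCompanion_succ_apply]

/-- **Lemma 2.16.** Let `𝔓` be a (not necessarily commutative) ring with identity, `n ≥ 2`
and `b ∈ 𝔓`.  For the `n × n` matrix `A` with `b` on the diagonal and `1` on the first
subdiagonal, there are upper triangular matrices `B`, `C` with all diagonal entries `1`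
such that `B * A * C` has `1` on the first subdiagonal, `(-1)^(n+1) * b^n` in the upper
right corner, and `0` elsewhere (matrices below are `0`-indexed). -/
theorem stmt2 {P : Type*} [Ring P] (n : ℕ) (hn : 2 ≤ n) (b : P)
    (A : Matrix (Fin n) (Fin n) P)
    (hA : ∀ i j : Fin n, A i j =
      if (i : ℕ) = (j : ℕ) then b
      else if (i : ℕ) = (j : ℕ) + 1 then 1
      else 0) :
    ∃ B C : Matrix (Fin n) (Fin n) P,
      (∀ i : Fin n, B i i = 1) ∧ (∀ i j : Fin n, (j : ℕ) < (i : ℕ) → B i j = 0) ∧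
      (∀ i : Fin n, C i i = 1) ∧ (∀ i j : Fin n, (j : ℕ) < (i : ℕ) → C i j = 0) ∧
      ∀ i j : Fin n, (B * A * C) i j =
        if (i : ℕ) = (j : ℕ) + 1 then 1
        else if (i : ℕ) = 0 ∧ (j : ℕ) = n - 1 then (-1 : P) ^ (n + 1) * b ^ n
        else 0 := by
  simpa using stmt2_general n (fun _ => b) A hA
end

section
/- Let 𝔓 be a (not necessarily commutative) ring with identity, let n ≥ 3 and 1 ≤ k ≤ n−1 be integers, set m = n−k, let b ∈ 𝔓 and let u, v be central elements of 𝔓. Let B_k ∈ M_n(𝔓) be the matrix with (i,i)-entry b for 1 ≤ i ≤ n, (i+1,i)-entry 1 for every i ∈ {1,…,n−1} with i ≠ k, (k+1,k)-entry u, (1,n)-entry v, and all other entries 0. Then B_k is equivalent to the block diagonal matrix I_{n−2} ⊕ [[(−1)^{k+1} b^k, v],[u, (−1)^{m+1} b^m]], where I_{n−2} is the identity matrix of size n−2. -/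
/-!
Cut the rows and the columns of `B` after the first `k`. The two diagonal blocks are lower
bidiagonal, and the off-diagonal blocks have a single entry, `v` resp. `u`, in their upper right
corner. Adding to the first row of a bidiagonal block the multiples by `(-b) ^ i` of its `i`-th row
leaves only `-(-b) ^ r` in the last column, `r` being the size of the block, and this does not touch
`u` and `v`. Without the first row and the last column a bidiagonal block is upper unitriangular,
hence invertible. So the target is the Schur complement in `B` of these two unitriangular blocks.
-/

open Matrix

section Equivalence

variable {R m n m' n' : Type*} [Fintype m] [DecidableEq m] [Fintype n] [DecidableEq n]
  [Fintype m'] [DecidableEq m'] [Fintype n'] [DecidableEq n']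

/-- Equivalence of (possibly rectangular) matrices over a ring: `A = U * B * V` with `U` and `V`
invertible. -/
def AreEquivalent [Semiring R] (A B : Matrix m n R) : Prop :=
  ∃ (U : Matrix m m R) (V : Matrix n n R), IsUnit U ∧ IsUnit V ∧ A = U * B * V

theorem isUnit_submatrix_of_isUnit [Semiring R] {A : Matrix n n R} (hA : IsUnit A)
    (e f : m ≃ n) : IsUnit (A.submatrix e f) := by
  obtain ⟨A', hA₁, hA₂⟩ := isUnit_iff_exists.mp hA
  refine isUnit_iff_exists.mpr ⟨A'.submatrix f e, ?_, ?_⟩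
  · rw [submatrix_mul_equiv, hA₁, submatrix_one_equiv]
  · rw [submatrix_mul_equiv, hA₂, submatrix_one_equiv]

theorem AreEquivalent.of_submatrix [Semiring R] {A B : Matrix m n R}
    (e g : m' ≃ m) (f h : n' ≃ n) (hAB : AreEquivalent (A.submatrix e f) (B.submatrix g h)) :
    AreEquivalent A B := by
  obtain ⟨U, V, hU, hV, hUV⟩ := hAB
  refine ⟨U.submatrix e.symm g.symm, V.submatrix h.symm f.symm,
    isUnit_submatrix_of_isUnit hU _ _, isUnit_submatrix_of_isUnit hV _ _, ?_⟩
  calc A = (A.submatrix e f).submatrix e.symm f.symm := by simp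
    _ = (U * B.submatrix g h * V).submatrix e.symm f.symm := by rw [hUV]
    _ = U.submatrix e.symm g.symm * (B.submatrix g h).submatrix g.symm h.symm *
          V.submatrix h.symm f.symm := by simp only [submatrix_mul_equiv]
    _ = U.submatrix e.symm g.symm * B * V.submatrix h.symm f.symm := by simp

theorem isUnit_fromBlocks_of_isUnit [Ring R] {A : Matrix m m R} {D : Matrix n n R}
    (hA : IsUnit A) (hD : IsUnit D) (B : Matrix m n R) : IsUnit (fromBlocks A B 0 D) := by
  obtain ⟨A', hA₁, hA₂⟩ := isUnit_iff_exists.mp hA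
  obtain ⟨D', hD₁, hD₂⟩ := isUnit_iff_exists.mp hD
  refine isUnit_iff_exists.mpr ⟨fromBlocks A' (-(A' * B * D')) 0 D', ?_, ?_⟩
  · simp [fromBlocks_multiply, ← Matrix.mul_assoc, hA₁, hD₁]
  · simp [fromBlocks_multiply, Matrix.mul_assoc, hA₂, hD₂]

-- `T` plays the role of `-C * A⁻¹` for `M = fromBlocks A B C D`, and `S` is the Schur complement.
theorem areEquivalent_of_fromCols_mul_eq [Ring R] {M : Matrix (m ⊕ n) (m ⊕ n) R}
    {T : Matrix n m R} {S : Matrix n n R} (hM : IsUnit M.toBlocks₁₁)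
    (hT : fromCols T (1 : Matrix n n R) * M = fromCols 0 S) :
    AreEquivalent M (fromBlocks 1 0 0 S) := by
  obtain ⟨A, B, C, D, rfl⟩ : ∃ A B C D, M = fromBlocks A B C D :=
    ⟨_, _, _, _, (fromBlocks_toBlocks M).symm⟩
  rw [fromCols_mul_fromBlocks, fromCols_ext_iff, Matrix.one_mul, Matrix.one_mul] at hT
  obtain ⟨hC, rfl⟩ := hT
  have hinv (X : Matrix n m R) : fromBlocks 1 0 X 1 * fromBlocks 1 0 (-X) (1 : Matrix n n R) =
      (1 : Matrix (m ⊕ n) (m ⊕ n) R) := by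
    simp [fromBlocks_multiply]
  have hunit : IsUnit (fromBlocks 1 0 (-T) 1 : Matrix (m ⊕ n) (m ⊕ n) R) :=
    isUnit_iff_exists.mpr ⟨fromBlocks 1 0 T 1, by simpa using hinv (-T), hinv T⟩
  refine ⟨_, fromBlocks A B 0 1, hunit, isUnit_fromBlocks_of_isUnit hM isUnit_one B, ?_⟩
  simp [fromBlocks_multiply, ← eq_neg_of_add_eq_zero_right hC]

theorem areEquivalent_fromBlocks_of_fromCols_mul_eq [Ring R]
    {M₁ : Matrix (m ⊕ m') (m ⊕ m') R} {T₁ : Matrix m' m R} {S₁ : Matrix m' m' R}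
    {M₂ : Matrix (n ⊕ n') (n ⊕ n') R} {T₂ : Matrix n' n R} {S₂ : Matrix n' n' R}
    (hM₁ : IsUnit M₁.toBlocks₁₁) (hT₁ : fromCols T₁ (1 : Matrix m' m' R) * M₁ = fromCols 0 S₁)
    (hM₂ : IsUnit M₂.toBlocks₁₁) (hT₂ : fromCols T₂ (1 : Matrix n' n' R) * M₂ = fromCols 0 S₂)
    (E : Matrix m' n' R) (F : Matrix n' m' R) :
    AreEquivalent
      ((fromBlocks M₁ (fromBlocks 0 0 0 E) (fromBlocks 0 0 0 F) M₂).submatrix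
        (Equiv.sumSumSumComm m n m' n') (Equiv.sumSumSumComm m n m' n'))
      (fromBlocks 1 0 0 (fromBlocks S₁ E F S₂)) := by
  obtain ⟨A₁, B₁, C₁, D₁, rfl⟩ : ∃ A B C D, M₁ = fromBlocks A B C D :=
    ⟨_, _, _, _, (fromBlocks_toBlocks M₁).symm⟩
  obtain ⟨A₂, B₂, C₂, D₂, rfl⟩ : ∃ A B C D, M₂ = fromBlocks A B C D :=
    ⟨_, _, _, _, (fromBlocks_toBlocks M₂).symm⟩
  rw [fromCols_mul_fromBlocks, fromCols_ext_iff, Matrix.one_mul, Matrix.one_mul] at hT₁ hT₂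
  have hshuffle : (fromBlocks (fromBlocks A₁ B₁ C₁ D₁) (fromBlocks 0 0 0 E) (fromBlocks 0 0 0 F)
      (fromBlocks A₂ B₂ C₂ D₂)).submatrix
        (Equiv.sumSumSumComm m n m' n') (Equiv.sumSumSumComm m n m' n') =
      fromBlocks (fromBlocks A₁ 0 0 A₂) (fromBlocks B₁ 0 0 B₂) (fromBlocks C₁ 0 0 C₂)
        (fromBlocks D₁ E F D₂) := by
    ext ((i | i) | (i | i)) ((j | j) | (j | j)) <;> rfl
  rw [hshuffle]
  refine areEquivalent_of_fromCols_mul_eq (T := fromBlocks T₁ 0 0 T₂)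
    (by simpa using isUnit_fromBlocks_of_isUnit hM₁ hM₂ 0) ?_
  simp [fromCols_mul_fromBlocks, fromBlocks_multiply, fromBlocks_add, hT₁, hT₂]

end Equivalence

section Unitriangular

variable {R : Type*} {n : ℕ}

theorem pow_apply_eq_zero_of_strictUpper [Semiring R] {N : Matrix (Fin n) (Fin n) R}
    (hN : ∀ i j, j ≤ i → N i j = 0) (r : ℕ) {i j : Fin n} (hij : (j : ℕ) < i + r) :
    (N ^ r) i j = 0 := by
  induction r generalizing j with
  | zero => exact one_apply_ne (Fin.ne_of_gt hij)
  | succ r ih =>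
    rw [pow_succ, mul_apply]
    refine Finset.sum_eq_zero fun l _ => ?_
    rcases lt_or_ge (l : ℕ) (i + r) with hl | hl
    · rw [ih hl, zero_mul]
    · rw [hN l j (Fin.le_def.mpr (by omega)), mul_zero]

theorem isUnit_of_upper_unitriangular [Ring R] {A : Matrix (Fin n) (Fin n) R}
    (hdiag : ∀ i, A i i = 1) (hlower : ∀ i j, j < i → A i j = 0) : IsUnit A := by
  have hN : ∀ i j, j ≤ i → (A - 1) i j = 0 := by
    intro i j hij
    rcases hij.eq_or_lt with rfl | hlt
    · simp [hdiag]
    · simp [hlower i j hlt, hlt.ne']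
  have hnil : IsNilpotent (A - 1) :=
    ⟨n, ext fun i j => pow_apply_eq_zero_of_strictUpper hN n (by omega)⟩
  simpa using hnil.isUnit_one_add

end Unitriangular

section Bidiagonal

variable {R : Type*} [Ring R]

/-- The lower bidiagonal matrix with `b` on the diagonal and `1` on the subdiagonal: a diagonal
block of the matrix of the theorem. -/
def lowerBidiagonal (r : ℕ) (b : R) : Matrix (Fin r) (Fin r) R :=
  of fun i j => if (i : ℕ) = j then b else if (i : ℕ) = j + 1 then 1 else 0

theorem neg_pow_vecMul_lowerBidiagonal (c : ℕ) (b : R) :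
    (fun i : Fin (c + 1) => (-b) ^ (i : ℕ)) ᵥ* lowerBidiagonal (c + 1) b =
      Pi.single (Fin.last c) (-(-b) ^ (c + 1)) := by
  ext j
  have hsplit : ∀ i : Fin (c + 1), (-b) ^ (i : ℕ) * lowerBidiagonal (c + 1) b i j =
      (if i = j then (-b) ^ (i : ℕ) * b else 0) +
        (if (i : ℕ) = j + 1 then (-b) ^ (i : ℕ) else 0) := by
    intro i
    simp only [lowerBidiagonal, of_apply, Fin.ext_iff]
    split_ifs <;> first | omega | simp
  simp only [vecMul, dotProduct, hsplit, Finset.sum_add_distrib, Finset.sum_ite_eq',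
    Finset.mem_univ, if_true]
  induction j using Fin.lastCases with
  | last =>
    have hzero : ∀ i : Fin (c + 1), (i : ℕ) ≠ c + 1 := fun i => i.isLt.ne
    simp [hzero, pow_succ]
  | cast j =>
    have hsucc : ∀ i : Fin (c + 1), (i : ℕ) = j + 1 ↔ i = j.succ := fun i => by simp [Fin.ext_iff]
    simp [hsucc, pow_succ, j.castSucc_lt_last.ne]

/-- The enumeration of `Fin (c + 1)` in which `0` comes last, used to index the rows of a
bidiagonal block; the columns are indexed by `finSumFinEquiv`, in their natural order. -/
def zeroLastEquiv (c : ℕ) : Fin c ⊕ Fin 1 ≃ Fin (c + 1) :=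
  finSumFinEquiv.trans (finRotate (c + 1))

@[simp]
theorem zeroLastEquiv_inl {c : ℕ} (i : Fin c) : zeroLastEquiv c (Sum.inl i) = i.succ :=
  finRotate_of_lt i.isLt

@[simp]
theorem zeroLastEquiv_inr {c : ℕ} (i : Fin 1) : zeroLastEquiv c (Sum.inr i) = 0 := by
  rw [Subsingleton.elim i 0]
  exact finRotate_last

/-- A bidiagonal block with its first row moved to the bottom. -/
def rotatedBidiagonal (c : ℕ) (b : R) : Matrix (Fin c ⊕ Fin 1) (Fin c ⊕ Fin 1) R :=
  (lowerBidiagonal (c + 1) b).submatrix (zeroLastEquiv c) finSumFinEquiv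

theorem isUnit_toBlocks₁₁_rotatedBidiagonal (c : ℕ) (b : R) :
    IsUnit (rotatedBidiagonal c b).toBlocks₁₁ := by
  apply isUnit_of_upper_unitriangular
  · intro i
    simp [rotatedBidiagonal, toBlocks₁₁, lowerBidiagonal]
  · intro i j hij
    have hne : (i : ℕ) + 1 ≠ j := by omega
    simp [rotatedBidiagonal, toBlocks₁₁, lowerBidiagonal, hne,
      Fin.val_ne_of_ne hij.ne']

/-- The row of multipliers `-b, (-b) ^ 2, …, (-b) ^ c` that clears the last row of
`rotatedBidiagonal c b`. -/
def negPowRow (c : ℕ) (b : R) : Matrix (Fin 1) (Fin c) R :=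
  of fun _ i => (-b) ^ ((i : ℕ) + 1)

theorem fromCols_negPowRow_mul_rotatedBidiagonal (c : ℕ) (b : R) :
    fromCols (negPowRow c b) (1 : Matrix (Fin 1) (Fin 1) R) * rotatedBidiagonal c b =
      fromCols 0 !![-(-b) ^ (c + 1)] := by
  ext i j
  have hrow : (fromCols (negPowRow c b) (1 : Matrix (Fin 1) (Fin 1) R) *
      rotatedBidiagonal c b) i j =
      ((fun i : Fin (c + 1) => (-b) ^ (i : ℕ)) ᵥ* lowerBidiagonal (c + 1) b)
        (finSumFinEquiv j) := by
    simp [mul_apply, vecMul, dotProduct, Fin.sum_univ_succ, negPowRow, rotatedBidiagonal,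
      Subsingleton.elim i 0, add_comm]
  rw [hrow, neg_pow_vecMul_lowerBidiagonal]
  rcases j with j | j
  · simp [Fin.ext_iff, j.isLt.ne]
  · simp [Pi.single_apply, Fin.ext_iff]

/-- The matrix of the theorem in block form, with possibly different diagonal entries `a`, `b` in
its two bidiagonal blocks, of sizes `c + 1` and `d + 1`. -/
def coupledBidiagonal (c d : ℕ) (a b u v : R) :
    Matrix (Fin (c + 1) ⊕ Fin (d + 1)) (Fin (c + 1) ⊕ Fin (d + 1)) R :=
  fromBlocks (lowerBidiagonal (c + 1) a) (single 0 (Fin.last d) v) (single 0 (Fin.last c) u)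
    (lowerBidiagonal (d + 1) b)

/-- The row index of the `2 × 2` block decomposition of `coupledBidiagonal`: the first rows of the
two bidiagonal blocks come last. -/
def coupledRowEquiv (c d : ℕ) :
    (Fin c ⊕ Fin d) ⊕ (Fin 1 ⊕ Fin 1) ≃ Fin (c + 1) ⊕ Fin (d + 1) :=
  (Equiv.sumSumSumComm _ _ _ _).trans ((zeroLastEquiv c).sumCongr (zeroLastEquiv d))

/-- The column index of the `2 × 2` block decomposition of `coupledBidiagonal`: the last columns of
the two bidiagonal blocks come last. -/
def coupledColEquiv (c d : ℕ) :
    (Fin c ⊕ Fin d) ⊕ (Fin 1 ⊕ Fin 1) ≃ Fin (c + 1) ⊕ Fin (d + 1) :=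
  (Equiv.sumSumSumComm _ _ _ _).trans (finSumFinEquiv.sumCongr finSumFinEquiv)

theorem single_submatrix_zeroLastEquiv (c d : ℕ) (x : R) :
    (single 0 (Fin.last d) x).submatrix (zeroLastEquiv c) finSumFinEquiv =
      fromBlocks 0 0 0 !![x] := by
  ext (i | i) j
  · rcases j with j | j <;> simp [(Fin.succ_ne_zero i).symm]
  rcases j with j | j
  · simp [Fin.ext_iff, j.isLt.ne']
  · simp [single_apply, Fin.ext_iff]

theorem areEquivalent_coupledBidiagonal (c d : ℕ) (a b u v : R) :
    AreEquivalent
      ((coupledBidiagonal c d a b u v).submatrix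
        (coupledRowEquiv c d) (coupledColEquiv c d))
      (fromBlocks 1 0 0 (fromBlocks !![-(-a) ^ (c + 1)] !![v] !![u] !![-(-b) ^ (d + 1)])) := by
  have hblocks : (coupledBidiagonal c d a b u v).submatrix
      ((zeroLastEquiv c).sumCongr (zeroLastEquiv d))
      (finSumFinEquiv.sumCongr finSumFinEquiv) =
      fromBlocks (rotatedBidiagonal c a) (fromBlocks 0 0 0 !![v]) (fromBlocks 0 0 0 !![u])
        (rotatedBidiagonal d b) := by
    rw [← single_submatrix_zeroLastEquiv c d v, ← single_submatrix_zeroLastEquiv d c u]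
    ext (i | i) (j | j) <;> rfl
  rw [coupledRowEquiv, coupledColEquiv, Equiv.coe_trans, Equiv.coe_trans,
    ← submatrix_submatrix, hblocks]
  exact areEquivalent_fromBlocks_of_fromCols_mul_eq
    (isUnit_toBlocks₁₁_rotatedBidiagonal c a) (fromCols_negPowRow_mul_rotatedBidiagonal c a)
    (isUnit_toBlocks₁₁_rotatedBidiagonal d b) (fromCols_negPowRow_mul_rotatedBidiagonal d b)
    !![v] !![u]

end Bidiagonal

theorem neg_one_pow_succ_mul_pow {R : Type*} [Ring R] (b : R) (r : ℕ) :
    (-1) ^ (r + 1) * b ^ r = -(-b) ^ r := by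
  rw [neg_pow b r, pow_succ, mul_neg_one, neg_mul]

/-- The index of the block decomposition of the target matrix of the theorem: the identity block,
split as `Fin c ⊕ Fin d` to match `coupledRowEquiv`, followed by the last two indices. -/
def targetEquiv (c d : ℕ) : (Fin c ⊕ Fin d) ⊕ (Fin 1 ⊕ Fin 1) ≃ Fin (c + 1 + (d + 1)) :=
  (finSumFinEquiv.sumCongr finSumFinEquiv).trans
    (finSumFinEquiv.trans (finCongr (by omega)))

theorem submatrix_targetEquiv {R : Type*} [Ring R] (c d : ℕ) (p q u v : R) :
    (of fun i j : Fin (c + 1 + (d + 1)) =>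
      if (i : ℕ) = (j : ℕ) ∧ (i : ℕ) < c + 1 + (d + 1) - 2 then 1
      else if (i : ℕ) = c + 1 + (d + 1) - 2 ∧ (j : ℕ) = c + 1 + (d + 1) - 2 then p
      else if (i : ℕ) = c + 1 + (d + 1) - 2 ∧ (j : ℕ) = c + 1 + (d + 1) - 1 then v
      else if (i : ℕ) = c + 1 + (d + 1) - 1 ∧ (j : ℕ) = c + 1 + (d + 1) - 2 then u
      else if (i : ℕ) = c + 1 + (d + 1) - 1 ∧ (j : ℕ) = c + 1 + (d + 1) - 1 then q
      else 0).submatrix (targetEquiv c d) (targetEquiv c d) =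
      fromBlocks 1 0 0 (fromBlocks !![p] !![v] !![u] !![q]) := by
  ext ((i | i) | (i | i)) ((j | j) | (j | j)) <;>
    simp only [submatrix_apply, of_apply, targetEquiv, Equiv.trans_apply, Equiv.sumCongr_apply,
      Sum.map_inl, Sum.map_inr, finCongr_apply, Fin.val_cast, fromBlocks_apply₁₁,
      fromBlocks_apply₁₂, fromBlocks_apply₂₁, fromBlocks_apply₂₂, finSumFinEquiv_apply_left,
      finSumFinEquiv_apply_right, Fin.val_castAdd, Fin.val_natAdd, Matrix.one_apply,
      Matrix.zero_apply, Sum.inl.injEq, Sum.inr.injEq, reduceCtorEq, if_false,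
      cons_val_fin_one, Fin.ext_iff] <;>
    split_ifs <;> first | rfl | omega

theorem stmt3_general {P : Type*} [Ring P] (n k : ℕ) (hk1 : 1 ≤ k) (hk2 : k ≤ n - 1)
    (b u v : P) (B : Matrix (Fin n) (Fin n) P)
    (hB : ∀ i j : Fin n, B i j =
      if (i : ℕ) = (j : ℕ) then b
      else if (i : ℕ) = (j : ℕ) + 1 then (if (j : ℕ) = k - 1 then u else 1)
      else if (i : ℕ) = 0 ∧ (j : ℕ) = n - 1 then v
      else 0) :
    ∃ U V : Matrix (Fin n) (Fin n) P, IsUnit U ∧ IsUnit V ∧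
      B = U * (Matrix.of fun i j : Fin n =>
        if (i : ℕ) = (j : ℕ) ∧ (i : ℕ) < n - 2 then 1
        else if (i : ℕ) = n - 2 ∧ (j : ℕ) = n - 2 then (-1 : P) ^ (k + 1) * b ^ k
        else if (i : ℕ) = n - 2 ∧ (j : ℕ) = n - 1 then v
        else if (i : ℕ) = n - 1 ∧ (j : ℕ) = n - 2 then u
        else if (i : ℕ) = n - 1 ∧ (j : ℕ) = n - 1 then (-1 : P) ^ (n - k + 1) * b ^ (n - k)
        else 0) * V := by
  obtain ⟨c, rfl⟩ : ∃ c, k = c + 1 := ⟨k - 1, by omega⟩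
  obtain ⟨d, rfl⟩ : ∃ d, n = c + 1 + (d + 1) := ⟨n - (c + 1) - 1, by omega⟩
  have hBblocks : B.submatrix finSumFinEquiv finSumFinEquiv = coupledBidiagonal c d b b u v := by
    ext (i | i) (j | j) <;>
      simp only [submatrix_apply, hB, coupledBidiagonal, lowerBidiagonal, single_apply, of_apply,
        fromBlocks_apply₁₁, fromBlocks_apply₁₂, fromBlocks_apply₂₁, fromBlocks_apply₂₂,
        finSumFinEquiv_apply_left, finSumFinEquiv_apply_right, Fin.val_castAdd, Fin.val_natAdd,
        Fin.ext_iff, Fin.val_last, Fin.val_zero] <;>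
      split_ifs <;> first | rfl | omega
  have hd : c + 1 + (d + 1) - (c + 1) = d + 1 := by omega
  refine AreEquivalent.of_submatrix ((coupledRowEquiv c d).trans finSumFinEquiv)
    (targetEquiv c d) ((coupledColEquiv c d).trans finSumFinEquiv) (targetEquiv c d) ?_
  rw [submatrix_targetEquiv, hd, neg_one_pow_succ_mul_pow, neg_one_pow_succ_mul_pow,
    Equiv.coe_trans, Equiv.coe_trans, ← submatrix_submatrix, hBblocks]
  exact areEquivalent_coupledBidiagonal c d b b u v

/-- **Corollary 2.20, first part.** Let `𝔓` be a (not necessarily commutative) ring with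
identity, `n ≥ 3`, `1 ≤ k ≤ n - 1`, `m = n - k`, `b ∈ 𝔓` and `u`, `v` central elements
of `𝔓`.  The matrix `B_k` with `b` on the diagonal, `1` on the first subdiagonal except for
the entry `u` in (1-based) position `(k+1, k)`, and `v` in the upper right corner, is
equivalent to `I_{n-2} ⊕ [[(-1)^(k+1) b^k, v], [u, (-1)^(m+1) b^m]]`
(matrices below are `0`-indexed). -/
theorem stmt3 {P : Type*} [Ring P] (n k : ℕ) (hn : 3 ≤ n) (hk1 : 1 ≤ k) (hk2 : k ≤ n - 1)
    (b u v : P) (hu : ∀ a : P, a * u = u * a) (hv : ∀ a : P, a * v = v * a)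
    (B : Matrix (Fin n) (Fin n) P)
    (hB : ∀ i j : Fin n, B i j =
      if (i : ℕ) = (j : ℕ) then b
      else if (i : ℕ) = (j : ℕ) + 1 then (if (j : ℕ) = k - 1 then u else 1)
      else if (i : ℕ) = 0 ∧ (j : ℕ) = n - 1 then v
      else 0) :
    ∃ U V : Matrix (Fin n) (Fin n) P, IsUnit U ∧ IsUnit V ∧
      B = U * (Matrix.of fun i j : Fin n =>
        if (i : ℕ) = (j : ℕ) ∧ (i : ℕ) < n - 2 then 1
        else if (i : ℕ) = n - 2 ∧ (j : ℕ) = n - 2 then (-1 : P) ^ (k + 1) * b ^ k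
        else if (i : ℕ) = n - 2 ∧ (j : ℕ) = n - 1 then v
        else if (i : ℕ) = n - 1 ∧ (j : ℕ) = n - 2 then u
        else if (i : ℕ) = n - 1 ∧ (j : ℕ) = n - 1 then (-1 : P) ^ (n - k + 1) * b ^ (n - k)
        else 0) * V :=
  stmt3_general n k hk1 hk2 b u v B hB
end

section
/- Let 𝔓 be a (not necessarily commutative) ring with identity, let n ≥ 3 be an integer, let b ∈ 𝔓 and let u, v be central elements of 𝔓. Let D ∈ M_n(𝔓) be the matrix with (i,i)-entry b for 1 ≤ i ≤ n, (i+1,i)-entry 1 for 1 ≤ i ≤ n−1, (1,n)-entry uv, and all other entries 0. Then D is equivalent to the block diagonal matrix I_{n−2} ⊕ [[(−1)^n b^{n−1}, uv],[1, b]], where I_{n−2} is the identity matrix of size n−2. -/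
/-!
Let `E k a` be `I_k` followed by the block with `b` on the diagonal and `1` on the subdiagonal,
except that its first row starts with `a` and ends with `c`. Row `k + 1` reads `1, b` in columns
`k, k + 1`, so subtracting `a` times it from row `k` replaces the entry `a` by `-(a * b)`, one
column further right, and clearing that `b` with column `k` leaves a unit row. Exchanging the two
rows gives `E (k + 1) (-(a * b))`. Iterating from `E 0 b` yields `E k ((-1) ^ k * b ^ (k + 1))`.
-/

/-- Equivalence of square matrices: `A` is obtained from `B` by invertible row and column
operations. It is a relation on matrices over a fixed index type. -/
def MatrixEquivalent {ι R : Type*} [Fintype ι] [DecidableEq ι] [Semiring R]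
    (A B : Matrix ι ι R) : Prop :=
  ∃ U V : Matrix ι ι R, IsUnit U ∧ IsUnit V ∧ A = U * B * V

namespace MatrixEquivalent

variable {ι R : Type*} [Fintype ι] [DecidableEq ι]

section Semiring

variable [Semiring R] {A B C : Matrix ι ι R}

theorem refl (A : Matrix ι ι R) : MatrixEquivalent A A :=
  ⟨1, 1, isUnit_one, isUnit_one, by rw [one_mul, mul_one]⟩

theorem symm (h : MatrixEquivalent A B) : MatrixEquivalent B A := by
  obtain ⟨_, _, ⟨U, rfl⟩, ⟨V, rfl⟩, rfl⟩ := h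
  exact ⟨↑U⁻¹, ↑V⁻¹, U⁻¹.isUnit, V⁻¹.isUnit, by
    rw [mul_assoc, Units.mul_inv_cancel_right, Units.inv_mul_cancel_left]⟩

theorem trans (hAB : MatrixEquivalent A B) (hBC : MatrixEquivalent B C) :
    MatrixEquivalent A C := by
  obtain ⟨U, V, hU, hV, rfl⟩ := hAB
  obtain ⟨U', V', hU', hV', rfl⟩ := hBC
  exact ⟨U * U', V' * V, hU.mul hU', hV'.mul hV, by simp only [mul_assoc]⟩

theorem mul_left_of_isUnit {U : Matrix ι ι R} (hU : IsUnit U) (A : Matrix ι ι R) :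
    MatrixEquivalent (U * A) A :=
  ⟨U, 1, hU, isUnit_one, (mul_one _).symm⟩

theorem mul_right_of_isUnit {V : Matrix ι ι R} (hV : IsUnit V) (A : Matrix ι ι R) :
    MatrixEquivalent (A * V) A :=
  ⟨1, V, isUnit_one, hV, by rw [one_mul]⟩

theorem submatrix_perm_left (σ : Equiv.Perm ι) (A : Matrix ι ι R) :
    MatrixEquivalent (A.submatrix σ id) A := by
  have permMatrix_mul_inv (τ : Equiv.Perm ι) : τ.permMatrix R * (τ⁻¹).permMatrix R = 1 := by
    rw [← Matrix.permMatrix_mul, inv_mul_cancel, Matrix.permMatrix_one]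
  have isUnit_permMatrix : IsUnit (σ.permMatrix R) :=
    ⟨⟨_, _, permMatrix_mul_inv σ, by simpa only [inv_inv] using permMatrix_mul_inv σ⁻¹⟩, rfl⟩
  rw [← PEquiv.toMatrix_toPEquiv_mul]
  exact mul_left_of_isUnit isUnit_permMatrix A

end Semiring

section Ring

variable [Ring R] {i j : ι}

-- `Matrix.transvection` is only available over commutative rings.
theorem isUnit_one_add_single (hij : i ≠ j) (c : R) :
    IsUnit (1 + Matrix.single i j c : Matrix ι ι R) :=
  IsNilpotent.isUnit_one_add ⟨2, by
    rw [sq]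
    exact Matrix.single_mul_single_of_ne c i j i hij.symm c⟩

theorem updateRow_add_smul (hij : i ≠ j) (c : R) (A : Matrix ι ι R) :
    MatrixEquivalent (A.updateRow i (A i + c • A j)) A := by
  have update_eq : A.updateRow i (A i + c • A j) = (1 + Matrix.single i j c) * A := by
    ext r s
    by_cases hr : r = i
    · subst hr
      simp [add_mul]
    · simp [add_mul, hr]
  rw [update_eq]
  exact mul_left_of_isUnit (isUnit_one_add_single hij c) A

theorem updateCol_add_smul (hij : i ≠ j) (c : R) (A : Matrix ι ι R) :
    MatrixEquivalent (A.updateCol j (A.col j + MulOpposite.op c • A.col i)) A := by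
  have update_eq : A.updateCol j (A.col j + MulOpposite.op c • A.col i) =
      A * (1 + Matrix.single i j c) := by
    ext r s
    by_cases hs : s = j
    · subst hs
      simp [mul_add]
    · simp [mul_add, hs]
  rw [update_eq]
  exact mul_right_of_isUnit (isUnit_one_add_single hij c) A

theorem updateRow_single_of_pivot (hij : i ≠ j) {A : Matrix ι ι R} (pivot : A i j = 1)
    (row_eq_zero : ∀ s, s ≠ i → s ≠ j → A i s = 0) (col_eq_zero : ∀ r, r ≠ i → A r j = 0) :
    MatrixEquivalent (A.updateRow i (Pi.single j 1)) A := by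
  have update_eq : A.updateRow i (Pi.single j 1) =
      A.updateCol i (A.col i + MulOpposite.op (-A i i) • A.col j) := by
    ext r s
    rcases eq_or_ne s i with rfl | hsi
    · rcases eq_or_ne r s with rfl | hrs
      · simp [pivot, hij]
      · simp [hrs, col_eq_zero r hrs]
    · rcases eq_or_ne r i with rfl | hri
      · rcases eq_or_ne s j with rfl | hsj
        · simp [hsi, pivot]
        · simp [hsi, hsj, row_eq_zero s hsi hsj]
      · simp [hri, hsi]
  rw [update_eq]
  exact updateCol_add_smul hij.symm (-A i i) A

theorem of_unit_pivot (hij : i ≠ j) {A B : Matrix ι ι R} (pivot : A i j = 1)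
    (row_eq_zero : ∀ s, s ≠ i → s ≠ j → A i s = 0)
    (col_eq_zero : ∀ r, r ≠ i → r ≠ j → A r j = 0)
    (unit_row : B j = Pi.single j 1) (reduced_row : B i = A j + (-A j j) • A i)
    (other_rows : ∀ r, r ≠ i → r ≠ j → B r = A r) : MatrixEquivalent A B := by
  let A₁ := A.updateRow j (A j + (-A j j) • A i)
  let A₂ := A₁.updateRow i (Pi.single j 1)
  have A₁_row_i : A₁ i = A i := Matrix.updateRow_ne hij
  have clear_row : MatrixEquivalent A₂ A₁ := by
    refine updateRow_single_of_pivot hij (by rw [A₁_row_i, pivot])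
      (fun s hsi hsj => by rw [A₁_row_i, row_eq_zero s hsi hsj]) fun r hri => ?_
    rcases eq_or_ne r j with rfl | hrj
    · simp [A₁, pivot]
    · simp [A₁, hrj, col_eq_zero r hri hrj]
  have swap_rows : B = A₂.submatrix (Equiv.swap i j) id := by
    ext r s
    rcases eq_or_ne r i with rfl | hri
    · simp [A₂, A₁, hij.symm, reduced_row]
    rcases eq_or_ne r j with rfl | hrj
    · simp [A₂, unit_row]
    · simp [A₂, A₁, Equiv.swap_apply_of_ne_of_ne hri hrj, hri, hrj, other_rows r hri hrj]
  rw [swap_rows]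
  exact (updateRow_add_smul hij.symm (-A j j) A).symm.trans
    (clear_row.symm.trans (submatrix_perm_left _ A₂).symm)

end Ring

end MatrixEquivalent

section CornerBidiagonal

variable {P : Type*}

/-- The `n × n` matrix `I_k ⊕ B`, where `B` is lower bidiagonal with `b` on the diagonal and `1` on
the subdiagonal, except that its first row has `a` as first and `c` as last entry. It is meant for
`k + 2 ≤ n`, so that these two entries are distinct; indices start at `0`. -/
def cornerBidiagonal [AddMonoidWithOne P] (n k : ℕ) (a b c : P) : Matrix (Fin n) (Fin n) P :=
  Matrix.of fun i j =>
    if (i : ℕ) < k then (if i = j then 1 else 0)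
    else if (i : ℕ) = k then (if (j : ℕ) = k then a else if (j : ℕ) + 1 = n then c else 0)
    else if i = j then b
    else if (i : ℕ) = j + 1 then 1
    else 0

section Rows

variable [AddMonoidWithOne P] {n k : ℕ} {a b c : P} {i j : Fin n}

theorem cornerBidiagonal_row_of_lt (hi : (i : ℕ) < k) :
    cornerBidiagonal n k a b c i = Pi.single i 1 := by
  ext s
  simp [cornerBidiagonal, hi, Pi.single_apply, eq_comm]

theorem cornerBidiagonal_row_of_eq (hi : (i : ℕ) = k) (hj : (j : ℕ) + 1 = n) (hij : i ≠ j) :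
    cornerBidiagonal n k a b c i = Pi.single i a + Pi.single j c := by
  ext s
  rw [← Fin.val_ne_iff] at hij
  simp only [cornerBidiagonal, Matrix.of_apply, Pi.add_apply, Pi.single_apply, Fin.ext_iff]
  split_ifs <;> first | omega | simp

theorem cornerBidiagonal_row_of_gt (hj : k ≤ (j : ℕ)) (hij : (i : ℕ) = j + 1) :
    cornerBidiagonal n k a b c i = Pi.single i b + Pi.single j 1 := by
  ext s
  simp only [cornerBidiagonal, Matrix.of_apply, Pi.add_apply, Pi.single_apply, Fin.ext_iff]
  split_ifs <;> first | omega | simp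

theorem cornerBidiagonal_succ_row {a' : P} (hik : (i : ℕ) ≠ k) (hik' : (i : ℕ) ≠ k + 1) :
    cornerBidiagonal n (k + 1) a' b c i = cornerBidiagonal n k a b c i := by
  ext s
  simp only [cornerBidiagonal, Matrix.of_apply, Fin.ext_iff]
  split_ifs <;> first | rfl | omega

theorem cornerBidiagonal_pivot_col (hj : (j : ℕ) = k) (hik : (i : ℕ) ≠ k)
    (hik' : (i : ℕ) ≠ k + 1) : cornerBidiagonal n k a b c i j = 0 := by
  simp only [cornerBidiagonal, Matrix.of_apply, Fin.ext_iff]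
  split_ifs <;> first | rfl | omega

end Rows

variable [Ring P] {n k : ℕ}

theorem cornerBidiagonal_equivalent_succ (hk : k + 2 < n) (a b c : P) :
    MatrixEquivalent (cornerBidiagonal n k a b c)
      (cornerBidiagonal n (k + 1) (-(a * b)) b c) := by
  let p : Fin n := ⟨k, by omega⟩
  let q : Fin n := ⟨k + 1, by omega⟩
  let last : Fin n := ⟨n - 1, by omega⟩
  have last_succ : (last : ℕ) + 1 = n := Nat.sub_add_cancel (by omega)
  have hpq : p ≠ q := by simp [p, q]
  have hp_last : p ≠ last := by rw [← Fin.val_ne_iff]; simp only [p]; omega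
  have hq_last : q ≠ last := by rw [← Fin.val_ne_iff]; simp only [q]; omega
  have row_p : cornerBidiagonal n k a b c p = Pi.single p a + Pi.single last c :=
    cornerBidiagonal_row_of_eq rfl last_succ hp_last
  have row_q : cornerBidiagonal n k a b c q = Pi.single q b + Pi.single p 1 :=
    cornerBidiagonal_row_of_gt le_rfl rfl
  refine .of_unit_pivot hpq.symm ?pivot ?row_eq_zero ?col_eq_zero ?unit_row ?reduced_row ?other_rows
  case pivot => simp [row_q, hpq]
  case row_eq_zero =>
    intro s hsq hsp
    simp [row_q, hsq, hsp]
  case col_eq_zero =>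
    exact fun i hiq hip =>
      cornerBidiagonal_pivot_col rfl (Fin.val_ne_iff.2 hip) (Fin.val_ne_iff.2 hiq)
  case unit_row => exact cornerBidiagonal_row_of_lt (Nat.lt_succ_self k)
  case reduced_row =>
    have corner_eq : cornerBidiagonal n k a b c p p = a := by simp [row_p, hp_last]
    rw [cornerBidiagonal_row_of_eq rfl last_succ hq_last, corner_eq, row_p, row_q, smul_add,
      ← Pi.single_smul, ← Pi.single_smul, smul_eq_mul, smul_eq_mul, mul_one, neg_mul,
      Pi.single_neg p]
    abel
  case other_rows =>
    exact fun i hiq hip =>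
      cornerBidiagonal_succ_row (Fin.val_ne_iff.2 hip) (Fin.val_ne_iff.2 hiq)

theorem cornerBidiagonal_zero_equivalent (b c : P) (hk : k + 2 ≤ n) :
    MatrixEquivalent (cornerBidiagonal n 0 b b c)
      (cornerBidiagonal n k ((-1) ^ k * b ^ (k + 1)) b c) := by
  induction k with
  | zero => simpa using MatrixEquivalent.refl (cornerBidiagonal n 0 b b c)
  | succ k ih =>
    have corner_succ : -((-1) ^ k * b ^ (k + 1) * b) = (-1) ^ (k + 1) * b ^ (k + 1 + 1) := by
      rw [pow_succ (-1 : P), pow_succ b (k + 1), mul_neg_one, neg_mul, mul_assoc]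
    rw [← corner_succ]
    exact (ih (by omega)).trans (cornerBidiagonal_equivalent_succ (by omega) _ b c)

end CornerBidiagonal

theorem stmt4_general {P : Type*} [Ring P] (n : ℕ) (hn : 2 ≤ n)
    (b c : P)
    (D : Matrix (Fin n) (Fin n) P)
    (hD : ∀ i j : Fin n, D i j =
      if (i : ℕ) = (j : ℕ) then b
      else if (i : ℕ) = (j : ℕ) + 1 then 1
      else if (i : ℕ) = 0 ∧ (j : ℕ) = n - 1 then c
      else 0) :
    ∃ U V : Matrix (Fin n) (Fin n) P, IsUnit U ∧ IsUnit V ∧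
      D = U * (Matrix.of fun i j : Fin n =>
        if (i : ℕ) = (j : ℕ) ∧ (i : ℕ) < n - 2 then 1
        else if (i : ℕ) = n - 2 ∧ (j : ℕ) = n - 2 then (-1 : P) ^ n * b ^ (n - 1)
        else if (i : ℕ) = n - 2 ∧ (j : ℕ) = n - 1 then c
        else if (i : ℕ) = n - 1 ∧ (j : ℕ) = n - 2 then 1
        else if (i : ℕ) = n - 1 ∧ (j : ℕ) = n - 1 then b
        else 0) * V := by
  obtain ⟨k, rfl⟩ : ∃ k, n = k + 2 := ⟨n - 2, by omega⟩
  have source_eq : D = cornerBidiagonal (k + 2) 0 b b c := by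
    ext i j
    simp only [hD, cornerBidiagonal, Matrix.of_apply, Fin.ext_iff]
    grind
  obtain ⟨U, V, hU, hV, equivalence⟩ := cornerBidiagonal_zero_equivalent b c (le_refl (k + 2))
  refine ⟨U, V, hU, hV, source_eq.trans (equivalence.trans ?_)⟩
  congr 2
  ext i j
  have neg_one_pow_add_two : (-1 : P) ^ (k + 2) = (-1) ^ k := by
    rw [pow_add, neg_one_sq, mul_one]
  simp only [cornerBidiagonal, Matrix.of_apply, Fin.ext_iff, neg_one_pow_add_two]
  split_ifs <;> first | rfl | omega

/-- **Corollary 2.20, second part.** Let `𝔓` be a (not necessarily commutative) ring with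
identity, `n ≥ 3`, `b ∈ 𝔓` and `u`, `v` central elements of `𝔓`.  The matrix `D` with `b`
on the diagonal, `1` on the first subdiagonal and `u * v` in the upper right corner is
equivalent to `I_{n-2} ⊕ [[(-1)^n b^(n-1), u v], [1, b]]` (matrices below are `0`-indexed). -/
theorem stmt4 {P : Type*} [Ring P] (n : ℕ) (hn : 3 ≤ n)
    (b u v : P) (hu : ∀ a : P, a * u = u * a) (hv : ∀ a : P, a * v = v * a)
    (D : Matrix (Fin n) (Fin n) P)
    (hD : ∀ i j : Fin n, D i j =
      if (i : ℕ) = (j : ℕ) then b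
      else if (i : ℕ) = (j : ℕ) + 1 then 1
      else if (i : ℕ) = 0 ∧ (j : ℕ) = n - 1 then u * v
      else 0) :
    ∃ U V : Matrix (Fin n) (Fin n) P, IsUnit U ∧ IsUnit V ∧
      D = U * (Matrix.of fun i j : Fin n =>
        if (i : ℕ) = (j : ℕ) ∧ (i : ℕ) < n - 2 then 1
        else if (i : ℕ) = n - 2 ∧ (j : ℕ) = n - 2 then (-1 : P) ^ n * b ^ (n - 1)
        else if (i : ℕ) = n - 2 ∧ (j : ℕ) = n - 1 then u * v
        else if (i : ℕ) = n - 1 ∧ (j : ℕ) = n - 2 then 1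
        else if (i : ℕ) = n - 1 ∧ (j : ℕ) = n - 1 then b
        else 0) * V :=
  stmt4_general n (by omega) b (u * v) D hD
end

section
/- Let K be a field of prime characteristic p such that b := [K:K^p] is finite, and let S = K[x_1,…,x_n]. Let f = x_1^{d_1}⋯x_n^{d_n} with each d_j a non-negative integer, and let e ≥ 1 be an integer such that q = p^e > max{d_1,…,d_n} + 1. Let 1 ≤ k ≤ q−1. Set Γ = {c = (c_1,…,c_n) ∈ ℤ^n : 0 ≤ c_j ≤ d_j for all j}, and for c ∈ Γ set η_k(c) = b^e · ∏_{j=1}^n max(0, q − |c_j q − k d_j|). Then F_*^e(S/f^kS) is isomorphic, as an S-module, to ⊕_{c∈Γ} (S/x^cS)^{⊕η_k(c)}, where x^c = x_1^{c_1}⋯x_n^{c_n}. -/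
universe u v

/-- `FStar φ M` is the module `M` with scalars twisted by the ring endomorphism `φ`;
for `φ` the `e`-th iterate of Frobenius this is the Frobenius pushforward `F_*^e M`. -/
def FStar {R : Type u} [CommSemiring R] (φ : R →+* R) (M : Type v) : Type v := M

instance {R : Type u} [CommSemiring R] (φ : R →+* R) (M : Type v) [AddCommGroup M] :
    AddCommGroup (FStar φ M) := inferInstanceAs (AddCommGroup M)

instance {R : Type u} [CommSemiring R] (φ : R →+* R) (M : Type v) [AddCommGroup M]
    [Module R M] : Module R (FStar φ M) := Module.compHom M φ

/-!
If `λ i` is a basis of `K` over `K ^ q`, then `F_*^e S` is free over `S` on the vectors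
`λ i * x ^ a` with `0 ≤ a j < q`: coefficients decompose along `λ`, and exponents by division with
remainder by `q`. In this basis a monomial ideal `(x ^ D)` is cut out one coordinate at a time,
since `x ^ (q m + a)` lies in it exactly when `m j ≥ ⌈(D j - a j) / q⌉` for all `j`. Hence
`F_*^e (S / x ^ D)` is a direct sum of the modules `S / x ^ c`, where `c j = ⌈(D j - a j) / q⌉`, and
for given `c` this ceiling is attained by `∏ j, max 0 (q - |c j * q - D j|)` vectors `a`.
-/

open Module MvPolynomial

/-- The isomorphism `N ≃ ⨁ R ⧸ P t` induced by a surjection from a free module onto `N` whose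
kernel is cut out coordinatewise by the ideals `P t`. -/
noncomputable def piQuotientEquivOfBasis {R ι M N : Type*} [CommRing R] [Fintype ι]
    [AddCommGroup M] [Module R M] [AddCommGroup N] [Module R N] (b : Basis ι R M) (P : ι → Ideal R)
    (f : M →ₗ[R] N) (hf : Function.Surjective f)
    (hker : ∀ x, f x = 0 ↔ ∀ i, b.repr x i ∈ P i) : N ≃ₗ[R] ((i : ι) → R ⧸ P i) := by
  classical
  refine (f.quotKerEquivOfSurjective hf).symm ≪≫ₗ
    Submodule.Quotient.equiv (LinearMap.ker f) (Submodule.pi Set.univ P) b.equivFun ?_ ≪≫ₗ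
    Submodule.quotientPi P
  ext y
  obtain ⟨x, rfl⟩ := b.equivFun.surjective y
  simp [hker]

theorem nonempty_pi_linearEquiv_of_card_fiber {R ι κ : Type*} [Semiring R] [Finite ι]
    (M : κ → Type*) [∀ c, AddCommMonoid (M c)] [∀ c, Module R (M c)] (γ : ι → κ) (η : κ → ℕ)
    (hη : ∀ c, Nat.card {i // γ i = c} = η c) :
    Nonempty (((i : ι) → M (γ i)) ≃ₗ[R] ((c : κ) → Fin (η c) → M c)) :=
  let E : ι ≃ Σ c, Fin (η c) := (Equiv.sigmaFiberEquiv γ).symm.trans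
    (Equiv.sigmaCongrRight fun c => Finite.equivFinOfCardEq (hη c))
  ⟨LinearEquiv.piCongrLeft R (fun s : Σ c, Fin (η c) => M s.1) E ≪≫ₗ
    LinearEquiv.piCurry R fun c _ => M c⟩

namespace FStar

section Module

variable {R : Type*} [CommSemiring R] {φ : R →+* R} {M N : Type*}
  [AddCommGroup M] [Module R M] [AddCommGroup N] [Module R N]

/-- The identity map from a module to its twist, used to keep the two module structures apart. -/
def of (φ : R →+* R) (M : Type*) [AddCommGroup M] : M ≃+ FStar φ M := AddEquiv.refl M

theorem of_smul (r : R) (x : M) : of φ M (φ r • x) = r • of φ M x := rfl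

theorem of_symm_smul (r : R) (x : FStar φ M) :
    (of φ M).symm (r • x) = φ r • (of φ M).symm x := rfl

/-- Functoriality of the twist. -/
def map (φ : R →+* R) (f : M →ₗ[R] N) : FStar φ M →ₗ[R] FStar φ N where
  toFun x := of φ N (f ((of φ M).symm x))
  map_add' x y := f.map_add x y
  map_smul' r x := f.map_smul (φ r) x

/-- A family `v` through which every vector is uniquely `∑ φ(a i) v i`, as a basis of the twist. -/
noncomputable def basisOfExistsUnique {ι : Type*} [Fintype ι] (v : ι → M)
    (h : ∀ x, ∃! a : ι → R, x = ∑ i, φ (a i) • v i) : Basis ι R (FStar φ M) :=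
  Basis.ofEquivFun <| LinearEquiv.symm <|
    LinearEquiv.ofBijective (Fintype.linearCombination R fun i => of φ M (v i)) <|
      (Function.bijective_iff_existsUnique _).2 fun x => by
        simpa only [eq_comm] using! h x

end Module

section Ring

variable {R : Type*} [CommRing R] {φ ψ : R →+* R} {ι κ M : Type*} [AddCommGroup M] [Module R M]

/-- A basis of the twist by a composite: take coordinates over `φ`, then coordinates over `ψ` of
each of them. -/
noncomputable def basisComp [Finite ι] [Finite κ] (μ : Basis ι R (FStar φ M))
    (ν : Basis κ R (FStar ψ R)) : Basis (ι × κ) R (FStar (φ.comp ψ) M) :=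
  Basis.ofEquivFun
    { toFun x t := ν.equivFun (of ψ R (μ.equivFun (of φ M ((of (φ.comp ψ) M).symm x)) t.1)) t.2
      invFun y := of (φ.comp ψ) M <| (of φ M).symm <| μ.equivFun.symm fun i =>
        (of ψ R).symm <| ν.equivFun.symm fun j => y (i, j)
      map_add' x y := by
        ext t
        simp only [map_add, Pi.add_apply]
      map_smul' r x := by
        ext t
        simp only [of_symm_smul, RingHom.comp_apply, of_smul, map_smul, Pi.smul_apply,
          RingHom.id_apply]
      left_inv x := by
        simp only [LinearEquiv.symm_apply_apply, AddEquiv.symm_apply_apply,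
          AddEquiv.apply_symm_apply]
      right_inv y := by simp }

theorem nonempty_basis_pow {B : ℕ} (μ : Basis (Fin B) R (FStar φ R)) (e : ℕ) :
    Nonempty (Basis (Fin (B ^ e)) R (FStar (φ ^ e) R)) := by
  induction e with
  | zero => exact ⟨Basis.singleton (Fin 1) R⟩
  | succ e ih =>
    obtain ⟨ν⟩ := ih
    rw [pow_succ, pow_succ]
    exact ⟨(basisComp ν μ).reindex finProdFinEquiv⟩

end Ring

end FStar

section Exponents

/-- Coordinatewise division with remainder of exponent vectors by `q`. -/
noncomputable def exponentDivModEquiv (σ : Type*) [Finite σ] (q : ℕ) [NeZero q] :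
    (σ →₀ ℕ) ≃ (σ →₀ ℕ) × (σ → Fin q) :=
  (Finsupp.equivFunOnFinite.trans (Equiv.piCongrRight fun _ => Nat.divModEquiv q)).trans <|
    (Equiv.arrowProdEquivProdArrow σ _ _).trans <|
      Equiv.prodCongr Finsupp.equivFunOnFinite.symm (Equiv.refl _)

variable {σ : Type*} [Finite σ] {q : ℕ} [NeZero q]

theorem exponentDivModEquiv_symm_apply (m : σ →₀ ℕ) (a : σ → Fin q) (j : σ) :
    (exponentDivModEquiv σ q).symm (m, a) j = q * m j + a j := by
  simp [exponentDivModEquiv, mul_comm]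

theorem smul_add_exponentDivModEquiv_symm_zero (m : σ →₀ ℕ) (a : σ → Fin q) :
    q • m + (exponentDivModEquiv σ q).symm (0, a) = (exponentDivModEquiv σ q).symm (m, a) := by
  ext j
  simp [exponentDivModEquiv_symm_apply]

-- The truncated `D j - a j` loses nothing: the true ceiling is at most `0` when `D j < a j`.
theorem le_exponentDivModEquiv_symm_iff (D : σ → ℕ) (m : σ →₀ ℕ) (a : σ → Fin q) :
    Finsupp.equivFunOnFinite.symm D ≤ (exponentDivModEquiv σ q).symm (m, a) ↔
      Finsupp.equivFunOnFinite.symm (fun j => (D j - a j) ⌈/⌉ q) ≤ m := by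
  simp [Finsupp.le_def, exponentDivModEquiv_symm_apply, ceilDiv_le_iff_le_mul (NeZero.pos q)]

end Exponents

theorem nat_ceilDiv_eq_iff {q : ℕ} (hq : 0 < q) (m c : ℕ) :
    m ⌈/⌉ q = c ↔ m ≤ q * c ∧ q * c < m + q := by
  rw [Nat.ceilDiv_eq_add_pred_div, Nat.div_eq_iff hq, mul_comm c q]
  omega

theorem card_fin_ceilDiv_sub_eq (q D c : ℕ) [NeZero q] :
    Nat.card {a : Fin q // (D - a) ⌈/⌉ q = c} = ((q : ℤ) - |(c : ℤ) * q - D|).toNat := by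
  have hfiber : (Finset.univ.filter fun a : Fin q => (D - a) ⌈/⌉ q = c).map Fin.valEmbedding =
      Finset.Ico (D - q * c) (min q (D + q - q * c)) := by
    ext a
    simp only [Finset.mem_map, Finset.mem_filter_univ, nat_ceilDiv_eq_iff (NeZero.pos q),
      Fin.valEmbedding_apply, Finset.mem_Ico, Fin.exists_iff]
    have hc : c = 0 ∨ q ≤ q * c := c.eq_zero_or_pos.imp_right (Nat.le_mul_of_pos_right q)
    constructor
    · rintro ⟨i, hi, h, rfl⟩
      rcases hc with rfl | hc <;> omega
    · intro h
      exact ⟨a, by omega, by omega, rfl⟩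
  rw [Nat.card_eq_fintype_card, Fintype.card_subtype, ← Finset.card_map Fin.valEmbedding, hfiber,
    Nat.card_Ico, show (c : ℤ) * q = (q * c : ℕ) by push_cast; ring]
  rcases abs_cases (((q * c : ℕ) : ℤ) - D) with h | h <;> omega

theorem card_prod_pi_fiber {ι σ : Type*} [Fintype σ] {α β : σ → Type*}
    (g : (j : σ) → α j → β j) (c : (j : σ) → β j) :
    Nat.card {t : ι × ((j : σ) → α j) // (fun j => g j (t.2 j)) = c} =
      Nat.card ι * ∏ j, Nat.card {a // g j a = c j} := by
  rw [← Nat.card_pi, ← Nat.card_prod]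
  exact Nat.card_congr
    { toFun t := (t.1.1, fun j => ⟨t.1.2 j, congrFun t.2 j⟩)
      invFun t := ⟨(t.1, fun j => t.2 j), funext fun j => (t.2 j).2⟩
      left_inv _ := rfl
      right_inv _ := rfl }

theorem mem_span_prod_X_pow_iff {σ K : Type*} [Fintype σ] [CommSemiring K] (D : σ → ℕ)
    (g : MvPolynomial σ K) :
    g ∈ Ideal.span {(∏ j, X j ^ D j : MvPolynomial σ K)} ↔
      ∀ M, coeff M g ≠ 0 → Finsupp.equivFunOnFinite.symm D ≤ M := by
  have hD : (∏ j, X j ^ D j : MvPolynomial σ K) =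
      monomial (Finsupp.equivFunOnFinite.symm D) 1 := by
    rw [monomial_eq, Finsupp.prod_fintype _ _ (by simp)]
    simp
  simpa [hD] using mem_ideal_span_monomial_image (x := g) (s := {Finsupp.equivFunOnFinite.symm D})

/-- The lift to a polynomial ring of an endomorphism `φ` of the coefficients that sends each
variable to its `q`-th power. When `φ` is the `e`-th iterate of Frobenius and `q = p ^ e`, it is
the `e`-th iterate of Frobenius. -/
noncomputable def toricFrobenius (σ : Type*) {K : Type*} [CommSemiring K] (φ : K →+* K) (q : ℕ) :
    MvPolynomial σ K →+* MvPolynomial σ K :=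
  (MvPolynomial.map φ).comp (expand q : MvPolynomial σ K →ₐ[K] MvPolynomial σ K)

section Polynomial

variable {σ K : Type*} [CommSemiring K] (φ : K →+* K) {q : ℕ}

theorem toricFrobenius_monomial (m : σ →₀ ℕ) (c : K) :
    toricFrobenius σ φ q (monomial m c) = monomial (q • m) (φ c) := by
  simp [toricFrobenius]

variable [NeZero q]

theorem coeff_toricFrobenius_mul_monomial [Finite σ] [DecidableEq (σ → Fin q)]
    (g : MvPolynomial σ K) (m : σ →₀ ℕ) (a a' : σ → Fin q) (c : K) :
    coeff ((exponentDivModEquiv σ q).symm (m, a))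
        (toricFrobenius σ φ q g * monomial ((exponentDivModEquiv σ q).symm (0, a')) c) =
      if a' = a then φ (coeff m g) * c else 0 := by
  classical
  induction g using MvPolynomial.induction_on' with
  | monomial m' c' =>
    simp only [toricFrobenius_monomial, monomial_mul, smul_add_exponentDivModEquiv_symm_zero,
      coeff_monomial, EmbeddingLike.apply_eq_iff_eq, Prod.mk.injEq]
    split_ifs <;> simp_all
  | add f g hf hg =>
    simp only [map_add, add_mul, coeff_add, hf, hg, ite_add_ite, add_zero]

end Polynomial

section Basis

variable {σ K ι : Type*} [Finite σ] [CommRing K] {φ : K →+* K} {q : ℕ} [NeZero q]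

/-- The vectors `μ i * x ^ a` with `0 ≤ a j < q`, which form a basis of the twist of the
polynomial ring by `toricFrobenius σ φ q` when `μ` is a basis of the twist of the coefficients
by `φ`. -/
noncomputable def toricVector (μ : Basis ι K (FStar φ K)) (t : ι × (σ → Fin q)) :
    FStar (toricFrobenius σ φ q) (MvPolynomial σ K) :=
  FStar.of _ _ <|
    monomial ((exponentDivModEquiv σ q).symm (0, t.2)) ((FStar.of φ K).symm (μ t.1))

theorem coeff_sum_smul_toricVector [Fintype ι] [Fintype (σ → Fin q)]
    (μ : Basis ι K (FStar φ K)) (s : ι × (σ → Fin q) → MvPolynomial σ K) (m : σ →₀ ℕ)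
    (a : σ → Fin q) :
    coeff ((exponentDivModEquiv σ q).symm (m, a))
        ((FStar.of (toricFrobenius σ φ q) _).symm (∑ t, s t • toricVector μ t)) =
      (FStar.of φ K).symm (μ.equivFun.symm fun i => coeff m (s (i, a))) := by
  classical
  simp only [map_sum, FStar.of_symm_smul, toricVector, AddEquiv.symm_apply_apply, smul_eq_mul,
    coeff_sum, coeff_toricFrobenius_mul_monomial, Fintype.sum_prod_type, Finset.sum_ite_eq',
    Finset.mem_univ, if_true, Basis.equivFun_symm_apply]

theorem linearIndependent_toricVector [Finite ι] (μ : Basis ι K (FStar φ K)) :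
    LinearIndependent (MvPolynomial σ K) (toricVector (σ := σ) (q := q) μ) := by
  cases nonempty_fintype ι
  cases nonempty_fintype (σ → Fin q)
  refine Fintype.linearIndependent_iff.2 fun s hs ⟨i, a⟩ => ?_
  ext m
  have hcoeff := coeff_sum_smul_toricVector μ s m a
  rw [hs, map_zero, coeff_zero, eq_comm, EmbeddingLike.map_eq_zero_iff,
    EmbeddingLike.map_eq_zero_iff] at hcoeff
  exact congrFun hcoeff i

theorem of_monomial_eq_sum_smul_toricVector [Fintype ι] (μ : Basis ι K (FStar φ K))
    (m : σ →₀ ℕ) (a : σ → Fin q) (c : K) :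
    FStar.of (toricFrobenius σ φ q) _ (monomial ((exponentDivModEquiv σ q).symm (m, a)) c) =
      ∑ i, monomial m (μ.repr (FStar.of φ K c) i) • toricVector μ (i, a) := by
  have hc : c = ∑ i, φ (μ.repr (FStar.of φ K c) i) * (FStar.of φ K).symm (μ i) :=
    (μ.sum_repr (FStar.of φ K c)).symm
  simp only [toricVector, ← FStar.of_smul, ← map_sum, smul_eq_mul, toricFrobenius_monomial,
    monomial_mul, smul_add_exponentDivModEquiv_symm_zero, ← hc]

theorem span_range_toricVector [Finite ι] (μ : Basis ι K (FStar φ K)) :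
    Submodule.span (MvPolynomial σ K) (Set.range (toricVector (σ := σ) (q := q) μ)) = ⊤ := by
  cases nonempty_fintype ι
  refine Submodule.eq_top_iff'.2 fun (g : MvPolynomial σ K) => ?_
  induction g using MvPolynomial.induction_on' with
  | monomial M c =>
    obtain ⟨⟨m, a⟩, rfl⟩ := (exponentDivModEquiv σ q).symm.surjective M
    refine of_monomial_eq_sum_smul_toricVector μ m a c ▸ Submodule.sum_mem _ fun i _ => ?_
    exact Submodule.smul_mem _ _ (Submodule.subset_span ⟨(i, a), rfl⟩)
  | add f g hf hg => exact Submodule.add_mem _ hf hg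

/-- The basis `toricVector μ` of the twisted polynomial ring. -/
noncomputable def toricBasis [Finite ι] (μ : Basis ι K (FStar φ K)) :
    Basis (ι × (σ → Fin q)) (MvPolynomial σ K)
      (FStar (toricFrobenius σ φ q) (MvPolynomial σ K)) :=
  Basis.mk (linearIndependent_toricVector μ) (span_range_toricVector μ).ge

theorem toricBasis_apply [Finite ι] (μ : Basis ι K (FStar φ K)) (t : ι × (σ → Fin q)) :
    toricBasis μ t = toricVector μ t :=
  Basis.mk_apply _ _ t

theorem coeff_toricBasis_repr [Finite ι] (μ : Basis ι K (FStar φ K)) (g : MvPolynomial σ K)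
    (m : σ →₀ ℕ) (i : ι) (a : σ → Fin q) :
    coeff m ((toricBasis μ).repr (FStar.of (toricFrobenius σ φ q) _ g) (i, a)) =
      μ.repr (FStar.of φ K (coeff ((exponentDivModEquiv σ q).symm (m, a)) g)) i := by
  cases nonempty_fintype ι
  cases nonempty_fintype (σ → Fin q)
  set s := (toricBasis μ).repr (FStar.of (toricFrobenius σ φ q) _ g)
  have hsum : ∑ t, s t • toricVector μ t = FStar.of (toricFrobenius σ φ q) _ g := by
    simp only [← toricBasis_apply]
    exact (toricBasis μ).sum_repr _
  have hcoeff := coeff_sum_smul_toricVector μ s m a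
  rw [hsum, AddEquiv.symm_apply_apply] at hcoeff
  rw [hcoeff, AddEquiv.apply_symm_apply, ← μ.equivFun_apply, LinearEquiv.apply_symm_apply]

end Basis

section Quotient

variable {σ K ι : Type*} [Fintype σ] [CommRing K] {φ : K →+* K} {q : ℕ} [NeZero q]

theorem mem_span_prod_X_pow_iff_toricBasis_repr [Finite ι] (μ : Basis ι K (FStar φ K))
    (D : σ → ℕ) (g : MvPolynomial σ K) :
    g ∈ Ideal.span {(∏ j, X j ^ D j : MvPolynomial σ K)} ↔
      ∀ t, (toricBasis μ).repr (FStar.of (toricFrobenius σ φ q) _ g) t ∈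
        Ideal.span {(∏ j, X j ^ ((D j - t.2 j) ⌈/⌉ q) : MvPolynomial σ K)} := by
  have hcoeff (m : σ →₀ ℕ) (a : σ → Fin q) :
      coeff ((exponentDivModEquiv σ q).symm (m, a)) g ≠ 0 ↔ ∃ i, coeff m
        ((toricBasis μ).repr (FStar.of (toricFrobenius σ φ q) _ g) (i, a)) ≠ 0 := by
    rw [← not_forall_not, not_iff_not, ← (FStar.of φ K).map_eq_zero_iff, μ.ext_elem_iff]
    simp only [coeff_toricBasis_repr, map_zero, Finsupp.zero_apply, not_not]
  rw [mem_span_prod_X_pow_iff, ← (exponentDivModEquiv σ q).symm.forall_congr_right]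
  simp only [mem_span_prod_X_pow_iff, Prod.forall, le_exponentDivModEquiv_symm_iff, hcoeff]
  exact ⟨fun h i a m hi => h m a ⟨i, hi⟩, fun h m a ⟨i, hi⟩ => h i a m hi⟩

theorem nonempty_fstar_quotient_prod_X_pow_equiv {B : ℕ} (μ : Basis (Fin B) K (FStar φ K))
    (d D : σ → ℕ) (hD : ∀ j, D j ≤ q * d j) :
    Nonempty (FStar (toricFrobenius σ φ q) (MvPolynomial σ K ⧸
        Ideal.span {(∏ j, X j ^ D j : MvPolynomial σ K)}) ≃ₗ[MvPolynomial σ K]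
      ((c : (j : σ) → Fin (d j + 1)) →
        Fin (B * ∏ j, ((q : ℤ) - |(c j : ℤ) * q - D j|).toNat) →
          MvPolynomial σ K ⧸ Ideal.span {(∏ j, X j ^ (c j : ℕ) : MvPolynomial σ K)})) := by
  classical
  set I := Ideal.span {(∏ j, X j ^ D j : MvPolynomial σ K)}
  let ceil (j : σ) (a : Fin q) : Fin (d j + 1) :=
    ⟨(D j - a) ⌈/⌉ q, Nat.lt_succ_of_le <| (ceilDiv_le_iff_le_mul (NeZero.pos q)).2 <|
      (Nat.sub_le _ _).trans (hD j)⟩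
  let J (c : (j : σ) → Fin (d j + 1)) : Ideal (MvPolynomial σ K) :=
    Ideal.span {(∏ j, X j ^ (c j : ℕ) : MvPolynomial σ K)}
  have hcard (c : (j : σ) → Fin (d j + 1)) :
      Nat.card {t : Fin B × (σ → Fin q) // (fun j => ceil j (t.2 j)) = c} =
        B * ∏ j, ((q : ℤ) - |(c j : ℤ) * q - D j|).toNat := by
    simp only [card_prod_pi_fiber ceil, Nat.card_fin, ceil, Fin.ext_iff, card_fin_ceilDiv_sub_eq]
  obtain ⟨E⟩ := nonempty_pi_linearEquiv_of_card_fiber (R := MvPolynomial σ K)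
    (fun c => MvPolynomial σ K ⧸ J c) _ _ hcard
  refine ⟨piQuotientEquivOfBasis (toricBasis μ) (fun t => J fun j => ceil j (t.2 j))
    (FStar.map _ I.mkQ) I.mkQ_surjective (fun x => ?_) ≪≫ₗ E⟩
  exact (Submodule.Quotient.mk_eq_zero I).trans (mem_span_prod_X_pow_iff_toricBasis_repr μ D x)

end Quotient

theorem stmt15_general {K : Type*} [CommRing K] {p : ℕ} [ExpChar K p]
    {b : ℕ} (lam : Fin b → K) (hlam : ∀ x : K, ∃! a : Fin b → K, x = ∑ i, a i ^ p * lam i)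
    {σ : Type*} [Fintype σ] (d : σ → ℕ) (e k : ℕ) (hk : k ≤ p ^ e)
    (φS : MvPolynomial σ K →+* MvPolynomial σ K) (hφS : ∀ g, φS g = g ^ p ^ e) :
    Nonempty ((FStar φS (MvPolynomial σ K ⧸
        Ideal.span {(∏ j, X j ^ d j : MvPolynomial σ K) ^ k})) ≃ₗ[MvPolynomial σ K]
      ((c : (j : σ) → Fin (d j + 1)) →
        Fin (b ^ e * ∏ j, ((p ^ e : ℤ) - |(c j : ℤ) * p ^ e - k * d j|).toNat) →
          MvPolynomial σ K ⧸ Ideal.span {(∏ j, X j ^ (c j : ℕ) : MvPolynomial σ K)})) := by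
  have : NeZero (p ^ e) := ⟨(expChar_pow_pos K p e).ne'⟩
  have hφ : φS = toricFrobenius σ (iterateFrobenius K p e) (p ^ e) :=
    RingHom.ext fun g => (hφS g).trans (map_iterateFrobenius_expand p g e).symm
  have hf : (∏ j, X j ^ d j : MvPolynomial σ K) ^ k = ∏ j, X j ^ (k * d j) := by
    simp only [pow_mul', Finset.prod_pow]
  let ν : Basis (Fin b) K (FStar (frobenius K p) K) := FStar.basisOfExistsUnique lam hlam
  obtain ⟨μ⟩ := FStar.nonempty_basis_pow ν e
  rw [← iterateFrobenius_eq_pow] at μ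
  rw [hφ, hf, ← Nat.cast_pow]
  exact nonempty_fstar_quotient_prod_X_pow_equiv μ d (fun j => k * d j)
    fun j => Nat.mul_le_mul_right _ hk

/-- **Lemma 6.1 (`L4.25`).** Let `K` be a field of characteristic `p` with
`b = [K : K^p]` finite (witnessed by a basis `lam` of `K` over `K^p`), and
`S = K[x_1, …, x_n]`.  Let `f = x_1^{d_1} ⋯ x_n^{d_n}` with `d_j ≥ 0`, let `e ≥ 1` with
`q = p^e > max d_j + 1` and let `1 ≤ k ≤ q - 1`.  Then, with
`Γ = {c : 0 ≤ c_j ≤ d_j}` and `η_k(c) = b^e ∏_j max(0, q - |c_j q - k d_j|)`,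
`F_*^e (S/f^k S) ≅ ⊕_{c ∈ Γ} (S/x^c S)^{⊕ η_k(c)}` as `S`-modules. -/
theorem stmt15 {K : Type u} [Field K] {p : ℕ} [Fact p.Prime] [CharP K p]
    (b : ℕ) (lam : Fin b → K)
    (hlam : ∀ x : K, ∃! a : Fin b → K, x = ∑ i, a i ^ p * lam i)
    (n : ℕ) (d : Fin n → ℕ)
    (e : ℕ) (he : 1 ≤ e) (hq : ∀ j, d j + 1 < p ^ e)
    (k : ℕ) (hk1 : 1 ≤ k) (hk2 : k ≤ p ^ e - 1)
    (φS : MvPolynomial (Fin n) K →+* MvPolynomial (Fin n) K)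
    (hφS : ∀ g, φS g = g ^ p ^ e) :
    Nonempty ((FStar φS (MvPolynomial (Fin n) K ⧸
        Ideal.span {(∏ j, MvPolynomial.X j ^ d j : MvPolynomial (Fin n) K) ^ k}))
      ≃ₗ[MvPolynomial (Fin n) K]
      ((c : (j : Fin n) → Fin (d j + 1)) →
        Fin (b ^ e * ∏ j, ((p ^ e : ℤ) - |(c j : ℤ) * p ^ e - k * d j|).toNat) →
          MvPolynomial (Fin n) K ⧸
            Ideal.span {(∏ j, MvPolynomial.X j ^ ((c j : ℕ)) :
              MvPolynomial (Fin n) K)})) := by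
  exact stmt15_general lam hlam d e k (hk2.trans (Nat.sub_le _ _)) φS hφS
end
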